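/- arXiv:1205.5993 — 4 statements merged into one kernel-verified Lean document; each statement's English description precedes it below -/
import Mathlib

section
/- If X and Y are Banach spaces that are uniformly homeomorphic, i.e., there exists a bijection f : X → Y such that both f and f⁻¹ are uniformly continuous, then X is finitely representable in Y and Y is finitely representable in X. -/
/-- A Banach space `X` is (crudely) finitely representable in a Banach space `Y` if there exists
`K ∈ [1,∞)` such that for every finite-dimensional linear subspace `F ⊆ X` there is a linear
operator `T : F → Y` with `‖x‖ ≤ ‖T x‖ ≤ K ‖x‖` for all `x ∈ F`. -/
def FinitelyRepresentable (X Y : Type*) [NormedAddCommGroup X] [NormedSpace ℝ X]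
    [NormedAddCommGroup Y] [NormedSpace ℝ Y] : Prop :=
  ∃ K : ℝ, 1 ≤ K ∧ ∀ F : Subspace ℝ X, FiniteDimensional ℝ F →
    ∃ T : F →ₗ[ℝ] Y, ∀ x : F, ‖x‖ ≤ ‖T x‖ ∧ ‖T x‖ ≤ K * ‖x‖

/-!
A uniformly continuous map between normed spaces is Lipschitz at large distances, so a uniform
homeomorphism `f` distorts large distances by bounded factors only. Average `f` over a large box
spanned by finitely many vectors `v i`: by telescoping, the differences `Δ_[v i]` of the average
obey the Lipschitz bound without its additive error, and its second differences are negligible, so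
at each point they depend on the direction in an almost additive way.

The lower bound could be lost by cancellation in the average. To prevent this, replace `f` by a map
`g` with the same coarse constants that almost minimises `sup_x ∑ i, ‖Δ_[v i] g x‖`. The average of
`g` competes in this minimisation, so at some point its differences are almost as large as the
averages of the norms `‖Δ_[v i] g‖`, and those are bounded below.

In a finite-dimensional subspace `F`, the linear map that agrees with such an almost additive map on
a basis of very short vectors stays close to it on all lattice points near the unit sphere. These
form a net of the sphere, and bounds on a net pass to all of `F`.
-/

open Filter Topology
open scoped NNReal fwdDiff

/-! ### Coarse Lipschitz maps -/

section Coarse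

variable {X Y : Type*} [PseudoMetricSpace X] [PseudoMetricSpace Y]

/-- `f` is Lipschitz with constant `K` at large distances, i.e. up to an additive error. Only the
multiplicative constant is recorded: it is the one that survives averaging. -/
def CoarseLipschitzWith (K : ℝ≥0) (f : X → Y) : Prop :=
  ∃ C : ℝ, ∀ x y, dist (f x) (f y) ≤ K * dist x y + C

/-- `f` is expanding with constant `K⁻¹` at large distances, i.e. up to an additive error: the
coarse analogue of `AntilipschitzWith K f`. -/
def CoarseAntilipschitzWith (K : ℝ≥0) (f : X → Y) : Prop :=
  ∃ C : ℝ, ∀ x y, dist x y ≤ K * dist (f x) (f y) + C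

theorem CoarseLipschitzWith.coarseAntilipschitzWith_of_leftInverse {K : ℝ≥0} {f : X → Y}
    {g : Y → X} (hg : CoarseLipschitzWith K g) (hgf : Function.LeftInverse g f) :
    CoarseAntilipschitzWith K f := by
  obtain ⟨C, hC⟩ := hg
  exact ⟨C, fun x y => by simpa only [hgf x, hgf y] using hC (f x) (f y)⟩

theorem CoarseAntilipschitzWith.of_dist_le {K : ℝ≥0} {f g : X → Y} {R : ℝ}
    (hf : CoarseAntilipschitzWith K f) (hgf : ∀ x, dist (g x) (f x) ≤ R) :
    CoarseAntilipschitzWith K g := by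
  obtain ⟨C, hC⟩ := hf
  refine ⟨K * (2 * R) + C, fun x y => ?_⟩
  calc dist x y ≤ K * dist (f x) (f y) + C := hC x y
    _ ≤ K * (dist (g x) (g y) + 2 * R) + C := by
      gcongr
      linarith [dist_triangle4_left (g x) (g y) (f x) (f y), hgf x, hgf y]
    _ = K * dist (g x) (g y) + (K * (2 * R) + C) := by ring

end Coarse

/-- A segment from `x` to `y` is cut into about `dist x y / δ` pieces, on each of which `f` moves
by less than `1`. -/
theorem exists_coarseLipschitzWith_of_uniformContinuous {X Y : Type*} [SeminormedAddCommGroup X]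
    [NormedSpace ℝ X] [PseudoMetricSpace Y] {f : X → Y} (hf : UniformContinuous f) :
    ∃ K : ℝ≥0, CoarseLipschitzWith K f := by
  obtain ⟨δ, hδ, hfδ⟩ := Metric.uniformContinuous_iff.1 hf 1 one_pos
  refine ⟨⟨δ⁻¹, by positivity⟩, 1, fun x y => ?_⟩
  set n : ℕ := ⌊δ⁻¹ * dist x y⌋₊ + 1 with hn
  have n_pos : (0 : ℝ) < n := by positivity
  have mesh_lt : dist x y / n < δ := by
    rw [div_lt_comm₀ n_pos hδ, div_eq_inv_mul, hn]
    exact_mod_cast Nat.lt_floor_add_one _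
  let p : ℕ → X := fun i => AffineMap.lineMap x y ((i : ℝ) / n)
  have dist_step (i : ℕ) : dist (f (p i)) (f (p (i + 1))) ≤ 1 := by
    refine (hfδ ?_).le
    rw [dist_lineMap_lineMap, Real.dist_eq, ← sub_div, Nat.cast_succ, sub_add_cancel_left,
      abs_div, abs_neg, abs_one, Nat.abs_cast, one_div_mul_eq_div]
    exact mesh_lt
  calc dist (f x) (f y) = dist (f (p 0)) (f (p n)) := by simp [p, n_pos.ne']
    _ ≤ ∑ _i ∈ Finset.range n, 1 := dist_le_range_sum_of_dist_le n fun {i} _ => dist_step i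
    _ = ⌊δ⁻¹ * dist x y⌋₊ + 1 := by simp [hn]
    _ ≤ δ⁻¹ * dist x y + 1 := by gcongr; exact Nat.floor_le (by positivity)

section CoarseNormed

variable {X Y : Type*} [SeminormedAddCommGroup X] [SeminormedAddCommGroup Y] {K : ℝ≥0}
  {f : X → Y}

theorem coarseLipschitzWith_iff_norm_fwdDiff_le :
    CoarseLipschitzWith K f ↔ ∃ C : ℝ, ∀ u x, ‖Δ_[u] f x‖ ≤ K * ‖u‖ + C := by
  refine exists_congr fun C => ⟨fun h u x => ?_, fun h x y => ?_⟩
  · simpa [fwdDiff, dist_eq_norm] using h (x + u) x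
  · simpa [fwdDiff, dist_eq_norm] using h (x - y) y

theorem coarseAntilipschitzWith_iff_norm_le_fwdDiff :
    CoarseAntilipschitzWith K f ↔ ∃ C : ℝ, ∀ u x, ‖u‖ ≤ K * ‖Δ_[u] f x‖ + C := by
  refine exists_congr fun C => ⟨fun h u x => ?_, fun h x y => ?_⟩
  · simpa [fwdDiff, dist_eq_norm] using h (x + u) x
  · simpa [fwdDiff, dist_eq_norm] using h (x - y) y

theorem CoarseLipschitzWith.coarseLipschitzWith_zero_fwdDiff (hf : CoarseLipschitzWith K f)
    (u : X) : CoarseLipschitzWith 0 (Δ_[u] f) := by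
  obtain ⟨C, hC⟩ := coarseLipschitzWith_iff_norm_fwdDiff_le.1 hf
  refine coarseLipschitzWith_iff_norm_fwdDiff_le.2 ⟨2 * (K * ‖u‖ + C), fun w x => ?_⟩
  calc ‖Δ_[w] (Δ_[u] f) x‖ ≤ ‖Δ_[u] f (x + w)‖ + ‖Δ_[u] f x‖ := norm_sub_le _ _
    _ ≤ (0 : ℝ≥0) * ‖w‖ + 2 * (K * ‖u‖ + C) := by
      rw [NNReal.coe_zero, zero_mul]
      linarith [hC u (x + w), hC u x]

end CoarseNormed

/-! ### Averages of translates -/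

section Average

variable {ι κ X E : Type*} [Fintype ι] [Fintype κ] [AddCommMonoid X] [AddCommGroup E] [Module ℝ E]

/-- The mean of the translates of `g` by the vectors `t i`; it vanishes when `ι` is empty. -/
noncomputable def shiftAverage (t : ι → X) (g : X → E) (x : X) : E :=
  (Fintype.card ι : ℝ)⁻¹ • ∑ i, g (x + t i)

/-- The mean of `g` over the `N` equally spaced points `x, x + u, …, x + (N - 1) u`. -/
noncomputable def segmentAverage (N : ℕ) (u : X) : (X → E) → X → E :=
  shiftAverage fun k : Fin N => (k : ℕ) • u

/-- The mean of `g` over the points `x + ∑ i, n i • v i` with `0 ≤ n i < N`. -/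
noncomputable def boxAverage [DecidableEq ι] (N : ℕ) (v : ι → X) : (X → E) → X → E :=
  shiftAverage fun n : ι → Fin N => ∑ i, (n i : ℕ) • v i

theorem shiftAverage_comp_equiv (e : κ ≃ ι) (t : ι → X) (g : X → E) :
    shiftAverage (t ∘ e) g = shiftAverage t g := by
  ext x
  simp only [shiftAverage, Fintype.card_congr e, Function.comp_apply]
  rw [e.sum_comp fun i => g (x + t i)]

theorem shiftAverage_add_prod (s : ι → X) (t : κ → X) (g : X → E) :
    shiftAverage (fun p : ι × κ => s p.1 + t p.2) g = shiftAverage s (shiftAverage t g) := by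
  ext x
  simp only [shiftAverage, Fintype.card_prod, Fintype.sum_prod_type, Nat.cast_mul, mul_inv,
    mul_smul, add_assoc, Finset.smul_sum]

theorem shiftAverage_fwdDiff (t : ι → X) (u : X) (g : X → E) :
    shiftAverage t (Δ_[u] g) = Δ_[u] (shiftAverage t g) := by
  ext x
  simp only [shiftAverage, fwdDiff, Finset.sum_sub_distrib, smul_sub, add_right_comm x _ u]

theorem shiftAverage_mem [Nonempty ι] {t : ι → X} {g : X → E} {s : Set E} {x : X}
    (hs : Convex ℝ s) (hg : ∀ i, g (x + t i) ∈ s) : shiftAverage t g x ∈ s := by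
  rw [shiftAverage, Finset.smul_sum]
  exact hs.sum_mem (fun _ _ => by positivity) (by simp) fun i _ => hg i

theorem segmentAverage_fwdDiff (N : ℕ) (u : X) (g : X → E) :
    segmentAverage N u (Δ_[u] g) = (N : ℝ)⁻¹ • Δ_[N • u] g := by
  ext x
  have telescope := Finset.sum_range_sub (fun i : ℕ => g (x + i • u)) N
  rw [← Fin.sum_univ_eq_sum_range fun i => g (x + (i + 1) • u) - g (x + i • u)] at telescope
  simpa [segmentAverage, shiftAverage, fwdDiff, succ_nsmul, add_assoc] using
    congrArg ((N : ℝ)⁻¹ • ·) telescope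

theorem boxAverage_eq_boxAverage_segmentAverage [DecidableEq ι] (N : ℕ) (v : ι → X) (i : ι)
    (g : X → E) :
    boxAverage N v g =
      boxAverage N (fun j : {j // j ≠ i} => v j) (segmentAverage N (v i) g) := by
  simp only [boxAverage, segmentAverage]
  rw [← shiftAverage_add_prod, ← shiftAverage_comp_equiv
    ((Equiv.funSplitAt i (Fin N)).trans (Equiv.prodComm _ _))]
  congr 1 with n
  simpa [add_comm] using Fintype.sum_eq_add_sum_subtype_ne (fun j => (n j : ℕ) • v j) i

theorem boxAverage_mem_of_segmentAverage_mem [DecidableEq ι] {N : ℕ} [NeZero N] {v : ι → X}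
    (i : ι) {g : X → E} {s : Set E} (hs : Convex ℝ s) (hg : ∀ x, segmentAverage N (v i) g x ∈ s)
    (x : X) : boxAverage N v g x ∈ s := by
  rw [boxAverage_eq_boxAverage_segmentAverage N v i]
  exact shiftAverage_mem hs fun _ => hg _

theorem boxAverage_fwdDiff [DecidableEq ι] (N : ℕ) (v : ι → X) (u : X) (g : X → E) :
    boxAverage N v (Δ_[u] g) = Δ_[u] (boxAverage N v g) :=
  shiftAverage_fwdDiff _ u g

end Average

section NormAverage

variable {ι X E : Type*} [Fintype ι] [SeminormedAddCommGroup E] [NormedSpace ℝ E]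

theorem norm_shiftAverage_le [AddCommMonoid X] (t : ι → X) (g : X → E) (x : X) :
    ‖shiftAverage t g x‖ ≤ shiftAverage t (fun y => ‖g y‖) x := by
  simp only [shiftAverage, norm_smul, norm_inv, Real.norm_natCast, smul_eq_mul]
  gcongr
  exact norm_sum_le _ _

theorem norm_fwdDiff_boxAverage_le [DecidableEq ι] [AddCommMonoid X] (N : ℕ) (v : ι → X) (u : X)
    (g : X → E) (x : X) :
    ‖Δ_[u] (boxAverage N v g) x‖ ≤ boxAverage N v (fun y => ‖Δ_[u] g y‖) x := by
  rw [← boxAverage_fwdDiff]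
  exact norm_shiftAverage_le _ _ x

variable [SeminormedAddCommGroup X] {K : ℝ≥0} {g : X → E}

theorem CoarseLipschitzWith.exists_dist_shiftAverage_le [Nonempty ι] (hg : CoarseLipschitzWith K g)
    (t : ι → X) : ∃ R, ∀ x, dist (shiftAverage t g x) (g x) ≤ R := by
  obtain ⟨C, hC⟩ := hg
  refine ⟨K * ∑ i, ‖t i‖ + C, fun x => ?_⟩
  refine shiftAverage_mem (s := Metric.closedBall (g x) _) (convex_closedBall _ _) fun i => ?_
  calc dist (g (x + t i)) (g x) ≤ K * ‖t i‖ + C := by simpa using hC (x + t i) x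
    _ ≤ K * ∑ i, ‖t i‖ + C := by
      gcongr
      exact Finset.single_le_sum (f := fun i => ‖t i‖) (fun _ _ => norm_nonneg _)
        (Finset.mem_univ i)

theorem CoarseLipschitzWith.coarseLipschitzWith_shiftAverage [Nonempty ι]
    (hg : CoarseLipschitzWith K g) (t : ι → X) : CoarseLipschitzWith K (shiftAverage t g) := by
  rw [coarseLipschitzWith_iff_norm_fwdDiff_le] at hg ⊢
  obtain ⟨C, hC⟩ := hg
  refine ⟨C, fun u x => ?_⟩
  rw [← shiftAverage_fwdDiff, ← mem_closedBall_zero_iff]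
  exact shiftAverage_mem (convex_closedBall _ _) fun i => mem_closedBall_zero_iff.2 (hC u _)

theorem CoarseLipschitzWith.coarseLipschitzWith_boxAverage [DecidableEq ι]
    (hg : CoarseLipschitzWith K g) (N : ℕ) [NeZero N] (v : ι → X) :
    CoarseLipschitzWith K (boxAverage N v g) :=
  hg.coarseLipschitzWith_shiftAverage _

theorem CoarseAntilipschitzWith.coarseAntilipschitzWith_boxAverage [DecidableEq ι] {K' : ℝ≥0}
    (hg' : CoarseAntilipschitzWith K' g) (hg : CoarseLipschitzWith K g) (N : ℕ) [NeZero N]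
    (v : ι → X) : CoarseAntilipschitzWith K' (boxAverage N v g) := by
  obtain ⟨R, hR⟩ := hg.exists_dist_shiftAverage_le fun n : ι → Fin N => ∑ i, (n i : ℕ) • v i
  exact hg'.of_dist_le hR

end NormAverage

/-! ### Averages over large boxes -/

section LargeBox

variable {ι X E : Type*} [Fintype ι] [DecidableEq ι] [SeminormedAddCommGroup X]
  [NormedSpace ℝ X] [SeminormedAddCommGroup E] [NormedSpace ℝ E] {K : ℝ≥0} {g : X → E} {ε : ℝ}

theorem eventually_div_natCast_le (C : ℝ) (hε : 0 < ε) : ∀ᶠ N : ℕ in atTop, C / N ≤ ε :=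
  (tendsto_const_div_atTop_nhds_zero_nat C).eventually_le_const hε

theorem CoarseLipschitzWith.eventually_norm_fwdDiff_boxAverage_le (hg : CoarseLipschitzWith K g)
    (v : ι → X) (i : ι) (hε : 0 < ε) :
    ∀ᶠ N in atTop, ∀ x, ‖Δ_[v i] (boxAverage N v g) x‖ ≤ K * ‖v i‖ + ε := by
  obtain ⟨C, hC⟩ := coarseLipschitzWith_iff_norm_fwdDiff_le.1 hg
  filter_upwards [eventually_div_natCast_le C hε, eventually_ne_atTop 0] with N hN N_ne x
  have : NeZero N := ⟨N_ne⟩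
  have norm_nsmul : ‖N • v i‖ = N * ‖v i‖ := by
    rw [← Nat.cast_smul_eq_nsmul ℝ, norm_smul, Real.norm_natCast]
  rw [← boxAverage_fwdDiff, ← mem_closedBall_zero_iff]
  refine boxAverage_mem_of_segmentAverage_mem i (convex_closedBall _ _) (fun y => ?_) x
  rw [mem_closedBall_zero_iff, segmentAverage_fwdDiff, Pi.smul_apply, norm_smul, norm_inv,
    Real.norm_natCast, ← div_eq_inv_mul]
  calc ‖Δ_[N • v i] g y‖ / N ≤ (K * (N * ‖v i‖) + C) / N := by
        gcongr
        exact (hC (N • v i) y).trans_eq (by rw [norm_nsmul])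
    _ = K * ‖v i‖ + C / N := by field_simp
    _ ≤ K * ‖v i‖ + ε := by gcongr

theorem CoarseAntilipschitzWith.eventually_norm_le_boxAverage (hg : CoarseAntilipschitzWith K g)
    (v : ι → X) (i : ι) (hε : 0 < ε) :
    ∀ᶠ N in atTop, ∀ x, ‖v i‖ ≤ K * boxAverage N v (fun y => ‖Δ_[v i] g y‖) x + ε := by
  obtain ⟨C, hC⟩ := coarseAntilipschitzWith_iff_norm_le_fwdDiff.1 hg
  filter_upwards [eventually_div_natCast_le C hε, eventually_ne_atTop 0] with N hN N_ne
  have : NeZero N := ⟨N_ne⟩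
  have norm_nsmul : ‖N • v i‖ = N * ‖v i‖ := by
    rw [← Nat.cast_smul_eq_nsmul ℝ, norm_smul, Real.norm_natCast]
  have convex_s : Convex ℝ {r : ℝ | ‖v i‖ ≤ K * r + ε} := by
    simpa only [Set.preimage, Set.mem_Ici, sub_le_iff_le_add, smul_eq_mul] using
      (convex_Ici (‖v i‖ - ε)).is_linear_preimage (IsLinearMap.isLinearMap_smul (K : ℝ))
  refine boxAverage_mem_of_segmentAverage_mem i convex_s fun y => ?_
  calc ‖v i‖ = ‖N • v i‖ / N := by rw [norm_nsmul]; field_simp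
    _ ≤ (K * ‖Δ_[N • v i] g y‖ + C) / N := by gcongr; exact hC (N • v i) y
    _ = K * ‖segmentAverage N (v i) (Δ_[v i] g) y‖ + C / N := by
      rw [segmentAverage_fwdDiff, Pi.smul_apply, norm_smul, norm_inv, Real.norm_natCast]
      field_simp
    _ ≤ K * segmentAverage N (v i) (fun y => ‖Δ_[v i] g y‖) y + ε := by
      gcongr
      exact norm_shiftAverage_le _ _ y

end LargeBox

/-! ### Almost additive bilipschitz maps -/

theorem exists_almost_minimal_upper_bound {α β : Type*} [Nonempty β] {P : α → Prop}
    {Φ : α → β → ℝ} (hΦ : ∀ a x, 0 ≤ Φ a x) {a₀ : α} (ha₀ : P a₀) {c₀ : ℝ}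
    (hc₀ : ∀ x, Φ a₀ x ≤ c₀) {ε : ℝ} (hε : 0 < ε) :
    ∃ a, P a ∧ ∃ c, (∀ x, Φ a x ≤ c) ∧ ∀ b, P b → ∃ x, c - ε < Φ b x := by
  let bounds : Set ℝ := {c | ∃ a, P a ∧ ∀ x, Φ a x ≤ c}
  have bddBelow_bounds : BddBelow bounds :=
    ⟨0, fun c ⟨a, _, ha⟩ => (hΦ a (Classical.arbitrary β)).trans (ha _)⟩
  obtain ⟨c, ⟨a, ha, hac⟩, hc⟩ := Real.lt_sInf_add_pos (s := bounds) ⟨c₀, a₀, ha₀, hc₀⟩ hε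
  refine ⟨a, ha, c, hac, fun b hb => ?_⟩
  by_contra! hbc
  linarith [csInf_le bddBelow_bounds ⟨b, hb, hbc⟩]

section AlmostAdditive

variable {ι X Y : Type*} [SeminormedAddCommGroup X] [SeminormedAddCommGroup Y] [NormedSpace ℝ Y]
  {K K' : ℝ≥0} {f : X → Y}

/-- `g` almost minimises the supremum over `x` of `∑ i, ‖Δ_[v i] g x‖`. Averaging cannot lower this
supremum much, so at some point Jensen's inequality `‖Δ (avg g)‖ ≤ avg ‖Δ g‖` is almost sharp in
every direction `v i`. -/
theorem exists_boxAverage_norm_fwdDiff_le [Fintype ι] [DecidableEq ι]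
    (hf : CoarseLipschitzWith K f) (hf' : CoarseAntilipschitzWith K' f) (v : ι → X)
    {ε : ℝ} (hε : 0 < ε) :
    ∃ g : X → Y, CoarseLipschitzWith K g ∧ CoarseAntilipschitzWith K' g ∧
      ∀ N ≠ 0, ∃ x, ∀ i,
        boxAverage N v (fun y => ‖Δ_[v i] g y‖) x ≤ ‖Δ_[v i] (boxAverage N v g) x‖ + ε := by
  obtain ⟨C, hC⟩ := coarseLipschitzWith_iff_norm_fwdDiff_le.1 hf
  obtain ⟨g, ⟨hg, hg'⟩, c, hgc, hc⟩ := exists_almost_minimal_upper_bound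
    (P := fun g : X → Y => CoarseLipschitzWith K g ∧ CoarseAntilipschitzWith K' g)
    (Φ := fun g x => ∑ i, ‖Δ_[v i] g x‖) (fun g x => by positivity) ⟨hf, hf'⟩
    (fun x => Finset.sum_le_sum fun i _ => hC (v i) x) hε
  refine ⟨g, hg, hg', fun N N_ne => ?_⟩
  have : NeZero N := ⟨N_ne⟩
  obtain ⟨x, hx⟩ := hc (boxAverage N v g)
    ⟨hg.coarseLipschitzWith_boxAverage N v, hg'.coarseAntilipschitzWith_boxAverage hg N v⟩
  have sum_average_le : ∑ i, boxAverage N v (fun y => ‖Δ_[v i] g y‖) x ≤ c := by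
    have average_sum_le : boxAverage N v (fun y => ∑ i, ‖Δ_[v i] g y‖) x ≤ c :=
      shiftAverage_mem (s := Set.Iic c) (convex_Iic c) fun _ => hgc _
    simpa only [boxAverage, shiftAverage, Finset.sum_comm (γ := ι), Finset.smul_sum] using
      average_sum_le
  refine ⟨x, fun i => ?_⟩
  have gap_le := Finset.single_le_sum
    (f := fun i => boxAverage N v (fun y => ‖Δ_[v i] g y‖) x - ‖Δ_[v i] (boxAverage N v g) x‖)
    (fun i _ => sub_nonneg.2 (norm_fwdDiff_boxAverage_le N v (v i) g x)) (Finset.mem_univ i)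
  rw [Finset.sum_sub_distrib] at gap_le
  linarith

variable [NormedSpace ℝ X]

theorem exists_almost_additive [Finite ι] (hf : CoarseLipschitzWith K f)
    (hf' : CoarseAntilipschitzWith K' f) (v : ι → X) {ε : ℝ} (hε : 0 < ε) :
    ∃ D : X → Y, (∀ i, ‖D (v i)‖ ≤ K * ‖v i‖ + ε ∧ ‖v i‖ ≤ K' * (‖D (v i)‖ + ε) + ε) ∧
      ∀ i j, ‖D (v i + v j) - D (v i) - D (v j)‖ ≤ ε := by
  classical
  have := Fintype.ofFinite ι
  obtain ⟨g, hg, hg', hsharp⟩ := exists_boxAverage_norm_fwdDiff_le hf hf' v hε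
  have upper := eventually_all.2 fun i => hg.eventually_norm_fwdDiff_boxAverage_le v i hε
  have lower := eventually_all.2 fun i => hg'.eventually_norm_le_boxAverage v i hε
  have additive := eventually_all.2 fun i => eventually_all.2 fun j =>
    (hg.coarseLipschitzWith_zero_fwdDiff (v i)).eventually_norm_fwdDiff_boxAverage_le v j hε
  obtain ⟨N, hupper, hlower, hadd, N_ne⟩ :=
    (upper.and (lower.and (additive.and (eventually_ne_atTop 0)))).exists
  obtain ⟨x, hx⟩ := hsharp N N_ne
  refine ⟨fun u => Δ_[u] (boxAverage N v g) x, fun i => ⟨hupper i x, ?_⟩, fun i j => ?_⟩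
  · refine (hlower i x).trans ?_
    gcongr
    exact hx i
  · calc _ = ‖Δ_[v j] (boxAverage N v (Δ_[v i] g)) x‖ := by
          rw [boxAverage_fwdDiff]
          simp only [fwdDiff, add_assoc, add_comm (v j)]
          congr 1
          abel
      _ ≤ (0 : ℝ≥0) * ‖v j‖ + ε := hadd i j x
      _ = ε := by rw [NNReal.coe_zero, zero_mul, zero_add]

/-- The maps are indexed by the finite set on which they are almost additive and by the accuracy. -/
theorem exists_tendsto_additive (hf : CoarseLipschitzWith K f)
    (hf' : CoarseAntilipschitzWith K' f) :
    ∃ D : Finset X × ℕ → X → Y,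
      (∀ u w, Tendsto (fun a => D a (u + w) - D a u - D a w) atTop (𝓝 0)) ∧
      ∀ u, ∀ ε > 0, ∀ᶠ a in atTop, ‖D a u‖ ≤ K * ‖u‖ + ε ∧ ‖u‖ ≤ K' * ‖D a u‖ + ε := by
  choose D hbounds hadd using fun a : Finset X × ℕ =>
    exists_almost_additive hf hf' (fun v : a.1 => (v : X)) (Nat.one_div_pos_of_nat (n := a.2))
  have eventually_mem (u : X) : ∀ᶠ a : Finset X × ℕ in atTop, u ∈ a.1 :=
    (eventually_ge_atTop ({u}, 0)).mono fun a ha => Finset.singleton_subset_iff.1 ha.1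
  have error_tendsto : Tendsto (fun a : Finset X × ℕ => 1 / ((a.2 : ℝ) + 1)) atTop (𝓝 0) :=
    tendsto_one_div_add_atTop_nhds_zero_nat.comp (tendsto_snd.mono_left prod_atTop_atTop_eq.ge)
  refine ⟨D, fun u w => squeeze_zero_norm' ?_ error_tendsto, fun u ε hε => ?_⟩
  · filter_upwards [eventually_mem u, eventually_mem w] with a hu hw
    exact hadd a ⟨u, hu⟩ ⟨w, hw⟩
  · have total_error_tendsto : Tendsto
        (fun a : Finset X × ℕ => K' * (1 / ((a.2 : ℝ) + 1)) + 1 / ((a.2 : ℝ) + 1)) atTop (𝓝 0) := by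
      simpa using (error_tendsto.const_mul (K' : ℝ)).add error_tendsto
    filter_upwards [eventually_mem u, error_tendsto.eventually_le_const hε,
      total_error_tendsto.eventually_le_const hε] with a hu hε₁ hε₂
    obtain ⟨hupper, hlower⟩ := hbounds a ⟨u, hu⟩
    constructor <;> linarith

end AlmostAdditive

theorem tendsto_sub_of_mem_closure {α A B : Type*} [AddCommGroup A] [AddCommGroup B]
    [TopologicalSpace B] [IsTopologicalAddGroup B] {l : Filter α} {D : α → A → B} {T : α → A →+ B}
    {s : Set A} (hD : ∀ u w, Tendsto (fun a => D a (u + w) - D a u - D a w) l (𝓝 0))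
    (hT : ∀ a, ∀ v ∈ s, T a v = D a v) {v : A} (hv : v ∈ AddSubgroup.closure s) :
    Tendsto (fun a => T a v - D a v) l (𝓝 0) := by
  have zero : Tendsto (fun a => T a 0 - D a 0) l (𝓝 0) := by simpa using hD 0 0
  induction hv using AddSubgroup.closure_induction with
  | mem v hv => simpa [hT _ v hv] using tendsto_const_nhds
  | zero => exact zero
  | add u w _ _ hu hw =>
    have := (hu.add hw).sub (hD u w)
    simp only [add_zero, sub_zero] at this
    refine this.congr fun a => ?_
    rw [map_add]
    abel
  | neg u _ hu =>
    have := (zero.sub hu).add (hD u (-u))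
    simp only [add_zero, sub_zero] at this
    refine this.congr fun a => ?_
    rw [add_neg_cancel, map_zero, map_neg]
    abel

/-! ### Linear maps controlled on a net of the unit sphere -/

section Net

variable {F Y : Type*} [NormedAddCommGroup F] [NormedSpace ℝ F]

theorem exists_basis_sum_norm_le [FiniteDimensional ℝ F] {δ : ℝ} (hδ : 0 < δ) :
    ∃ b : Module.Basis (Fin (Module.finrank ℝ F)) ℝ F, ∑ i, ‖b i‖ ≤ δ := by
  let b := Module.finBasis ℝ F
  let c : ℝ := δ / (∑ i, ‖b i‖ + 1)
  have c_pos : 0 < c := by positivity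
  refine ⟨b.unitsSMul fun _ => Units.mk0 c c_pos.ne', ?_⟩
  calc ∑ i, ‖b.unitsSMul (fun _ => Units.mk0 c c_pos.ne') i‖ = c * ∑ i, ‖b i‖ := by
        simp [Module.Basis.unitsSMul_apply, Units.smul_def, norm_smul, abs_of_pos c_pos,
          Finset.mul_sum]
    _ ≤ c * (∑ i, ‖b i‖ + 1) := by gcongr; linarith
    _ = δ := div_mul_cancel₀ _ (by positivity)

theorem exists_basis_finite_net_in_lattice [FiniteDimensional ℝ F] {δ : ℝ} (hδ : 0 < δ) :
    ∃ (b : Module.Basis (Fin (Module.finrank ℝ F)) ℝ F) (S : Finset F),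
      (∀ v ∈ S, v ∈ AddSubgroup.closure (Set.range b)) ∧
      ∀ u : F, ‖u‖ = 1 → ∃ v ∈ S, ‖u - v‖ ≤ δ := by
  obtain ⟨b, hb⟩ := exists_basis_sum_norm_le (F := F) hδ
  have hfin : (Metric.closedBall (0 : F) (1 + δ) ∩ Submodule.span ℤ (Set.range b)).Finite :=
    ZSpan.setFinite_inter b Metric.isBounded_closedBall
  refine ⟨b, hfin.toFinset, fun v hv => ?_, fun u hu => ?_⟩
  · rw [← Submodule.span_int_eq_addSubgroupClosure]
    exact (hfin.mem_toFinset.1 hv).2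
  · have floor_near : ‖u - ZSpan.floor b u‖ ≤ δ := (ZSpan.norm_fract_le b u).trans hb
    refine ⟨ZSpan.floor b u, hfin.mem_toFinset.2 ⟨?_, (ZSpan.floor b u).2⟩, floor_near⟩
    rw [mem_closedBall_zero_iff]
    linarith [norm_le_norm_add_norm_sub u (ZSpan.floor b u : F)]

variable [SeminormedAddCommGroup Y] [NormedSpace ℝ Y] {T : F →L[ℝ] Y} {δ : ℝ}

theorem opNorm_le_of_approx_sphere {M : ℝ} (hM : 0 ≤ M) (hδ : δ ≤ 1 / 2)
    (hT : ∀ u : F, ‖u‖ = 1 → ∃ v, ‖u - v‖ ≤ δ ∧ ‖T v‖ ≤ M) : ‖T‖ ≤ 2 * M := by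
  have self_bound : ‖T‖ ≤ M + ‖T‖ * (1 / 2) := by
    refine ContinuousLinearMap.opNorm_le_of_unit_norm (by positivity) fun u hu => ?_
    obtain ⟨v, huv, hv⟩ := hT u hu
    calc ‖T u‖ ≤ ‖T v‖ + ‖T (u - v)‖ := by
          rw [map_sub]; exact norm_le_norm_add_norm_sub' _ _
      _ ≤ M + ‖T‖ * (1 / 2) := by gcongr; exact T.le_opNorm_of_le (huv.trans hδ)
  linarith

theorem norm_le_of_approx_sphere {K : ℝ≥0} (hδ : δ * (1 + K * ‖T‖ / 2) ≤ 1 / 4)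
    (hT : ∀ u : F, ‖u‖ = 1 → ∃ v, ‖u - v‖ ≤ δ ∧ ‖v‖ ≤ K * ‖T v‖ + δ) (x : F) :
    ‖x‖ ≤ 2 * K * ‖T x‖ := by
  have lower_sphere (u : F) (hu : ‖u‖ = 1) : 1 ≤ 2 * K * ‖T u‖ := by
    obtain ⟨v, huv, hv⟩ := hT u hu
    have norm_v : 1 - δ ≤ ‖v‖ := by linarith [norm_le_norm_add_norm_sub' u v]
    have norm_Tv : ‖T v‖ ≤ ‖T u‖ + ‖T‖ * δ := calc
      ‖T v‖ ≤ ‖T u‖ + ‖T (u - v)‖ := by rw [map_sub]; exact norm_le_norm_add_norm_sub _ _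
      _ ≤ ‖T u‖ + ‖T‖ * δ := by gcongr; exact T.le_opNorm_of_le huv
    have := mul_le_mul_of_nonneg_left norm_Tv K.coe_nonneg
    linarith
  rcases eq_or_ne x 0 with rfl | hx
  · simp
  · have x_pos : 0 < ‖x‖ := norm_pos_iff.2 hx
    have := lower_sphere (‖x‖⁻¹ • x) (norm_smul_inv_norm (𝕜 := ℝ) hx)
    rwa [map_smul, norm_smul, norm_inv, norm_norm, mul_left_comm, le_inv_mul_iff₀ x_pos,
      mul_one] at this

/-- The value `1 / (4 (K + 1) (K' + 1))` makes `δ (K + 1)` and `δ K' ‖T‖`, with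
`‖T‖ ≤ 2 (K + 1)`, small. -/
theorem norm_bounds_of_approx_sphere {K K' : ℝ≥0} (hδ : δ = 1 / (4 * (K + 1) * (K' + 1)))
    (hT : ∀ u : F, ‖u‖ = 1 →
      ∃ v, ‖u - v‖ ≤ δ ∧ ‖T v‖ ≤ K * ‖v‖ + δ ∧ ‖v‖ ≤ K' * ‖T v‖ + δ) (x : F) :
    ‖x‖ ≤ 2 * K' * ‖T x‖ ∧ ‖T x‖ ≤ 2 * (K + 1) * ‖x‖ := by
  have K_nonneg := K.coe_nonneg
  have δ_pos : 0 < δ := by rw [hδ]; positivity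
  have δ_mul : δ * (K + 1) * (K' + 1) = 1 / 4 := by rw [hδ]; field_simp
  have δ_mul_le : δ * (K + 1) ≤ 1 / 4 := by nlinarith [mul_nonneg δ_pos.le K_nonneg]
  have δ_le : δ ≤ 1 / 4 := by nlinarith
  have opNorm_le : ‖T‖ ≤ 2 * (K + 1) := by
    refine opNorm_le_of_approx_sphere (by positivity) (δ_le.trans (by norm_num)) fun u hu => ?_
    obtain ⟨v, huv, hv, -⟩ := hT u hu
    have norm_v : ‖v‖ ≤ 1 + δ := by linarith [norm_le_norm_add_norm_sub u v]
    exact ⟨v, huv, by nlinarith⟩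
  refine ⟨norm_le_of_approx_sphere (δ := δ) ?_ (fun u hu => ?_) x, T.le_of_opNorm_le opNorm_le x⟩
  · calc δ * (1 + K' * ‖T‖ / 2) ≤ δ * (1 + K' * (2 * (K + 1)) / 2) := by gcongr
      _ ≤ 1 / 4 := by nlinarith
  · obtain ⟨v, huv, -, hv⟩ := hT u hu
    exact ⟨v, huv, hv⟩

end Net

section Rigidity

variable {X Y : Type*} [NormedAddCommGroup X] [NormedSpace ℝ X] [NormedAddCommGroup Y]
  [NormedSpace ℝ Y] {K K' : ℝ≥0} {f : X → Y}

theorem exists_linearMap_norm_bounds_on_finset (hf : CoarseLipschitzWith K f)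
    (hf' : CoarseAntilipschitzWith K' f) {F : Subspace ℝ X} {ι : Type*} (b : Module.Basis ι ℝ F)
    (S : Finset F) (hS : ∀ v ∈ S, v ∈ AddSubgroup.closure (Set.range b)) {ε : ℝ} (hε : 0 < ε) :
    ∃ T : F →ₗ[ℝ] Y, ∀ v ∈ S, ‖T v‖ ≤ K * ‖v‖ + ε ∧ ‖v‖ ≤ K' * ‖T v‖ + ε := by
  classical
  obtain ⟨D, hadd, hbounds⟩ := exists_tendsto_additive hf hf'
  let T (a : Finset X × ℕ) : F →ₗ[ℝ] Y := b.constr ℝ fun i => D a (b i)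
  have T_sub_D {v : F} (hv : v ∈ S) : Tendsto (fun a => T a v - D a v) atTop (𝓝 0) :=
    tendsto_sub_of_mem_closure (D := fun a (v : F) => D a v) (T := fun a => (T a).toAddMonoidHom)
      (fun u w => hadd u w) (by rintro a _ ⟨i, rfl⟩; simp [T]) (hS v hv)
  have close_and_bounded (v : F) (hv : v ∈ S) : ∀ᶠ a in atTop,
      ‖T a v‖ ≤ K * ‖v‖ + ε ∧ ‖v‖ ≤ K' * ‖T a v‖ + ε := by
    have gap_tendsto : Tendsto (fun a => ‖T a v - D a v‖) atTop (𝓝 0) :=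
      tendsto_zero_iff_norm_tendsto_zero.1 (T_sub_D hv)
    have scaled_gap_tendsto : Tendsto (fun a => K' * ‖T a v - D a v‖) atTop (𝓝 0) := by
      simpa using gap_tendsto.const_mul (K' : ℝ)
    filter_upwards [hbounds v (ε / 2) (half_pos hε),
      gap_tendsto.eventually_le_const (half_pos hε),
      scaled_gap_tendsto.eventually_le_const (half_pos hε)] with a ⟨hupper, hlower⟩ hgap hgap'
    have norm_D_le := mul_le_mul_of_nonneg_left
      (norm_le_norm_add_norm_sub (T a v) (D a v)) K'.coe_nonneg
    rw [Submodule.coe_norm]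
    constructor <;> linarith [norm_le_norm_add_norm_sub' (T a v) (D a v)]
  obtain ⟨a, ha⟩ := ((eventually_all_finset S).2 close_and_bounded).exists
  exact ⟨T a, ha⟩

theorem ribe_rigidity_general (hf : CoarseLipschitzWith K f)
    (hf' : CoarseAntilipschitzWith K' f) : FinitelyRepresentable X Y := by
  refine ⟨4 * (K + 1) * (K' + 1), by nlinarith [K.coe_nonneg, K'.coe_nonneg], fun F _ => ?_⟩
  let δ : ℝ := 1 / (4 * (K + 1) * (K' + 1))
  have δ_pos : 0 < δ := by positivity
  obtain ⟨b, S, S_lattice, S_net⟩ := exists_basis_finite_net_in_lattice (F := F) δ_pos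
  obtain ⟨T, hT⟩ := exists_linearMap_norm_bounds_on_finset hf hf' b S S_lattice δ_pos
  have T_bounds := norm_bounds_of_approx_sphere (T := T.toContinuousLinearMap) (δ := δ) rfl
    fun u hu => (S_net u hu).imp fun v ⟨hv, huv⟩ => ⟨huv, hT v hv⟩
  refine ⟨(2 * (K' + 1 : ℝ)) • T, fun x => ?_⟩
  obtain ⟨lower, upper⟩ := T_bounds x
  rw [LinearMap.coe_toContinuousLinearMap'] at lower upper
  rw [LinearMap.smul_apply, norm_smul, Real.norm_of_nonneg (by positivity)]
  exact ⟨by linarith [norm_nonneg (T x)], by nlinarith [K'.coe_nonneg]⟩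

end Rigidity

/-- **Ribe's rigidity theorem.** If `X` and `Y` are uniformly homeomorphic Banach spaces, then
`X` is finitely representable in `Y` and `Y` is finitely representable in `X`. -/
theorem ribe_rigidity (X Y : Type*) [NormedAddCommGroup X] [NormedSpace ℝ X] [CompleteSpace X]
    [NormedAddCommGroup Y] [NormedSpace ℝ Y] [CompleteSpace Y]
    (f : X → Y) (g : Y → X) (hgf : Function.LeftInverse g f) (hfg : Function.RightInverse g f)
    (hf : UniformContinuous f) (hg : UniformContinuous g) :
    FinitelyRepresentable X Y ∧ FinitelyRepresentable Y X := by
  obtain ⟨K, hf⟩ := exists_coarseLipschitzWith_of_uniformContinuous hf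
  obtain ⟨K', hg⟩ := exists_coarseLipschitzWith_of_uniformContinuous hg
  exact ⟨ribe_rigidity_general hf (hg.coarseAntilipschitzWith_of_leftInverse hgf),
    ribe_rigidity_general hg (hf.coarseAntilipschitzWith_of_leftInverse hfg)⟩
end

section
/- There exists a universal constant C ∈ (0,∞) such that for every Banach space (X,‖·‖_X), every q ∈ [1,∞), every integer n ≥ 2, and every f : {−1,1}^n → X, one has (E_ε[‖f(ε) − E_δ[f(δ)]‖_X^q])^{1/q} ≤ C (log n) (E_ε E_δ[‖Σ_{i=1}^n δ_i ∂_i f(ε)‖_X^q])^{1/q}, where ε and δ are independent and uniformly distributed over {−1,1}^n (Pisier's inequality). -/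
open scoped BigOperators

universe u

/-- The real sign `±1` associated to a Boolean coordinate of the discrete cube `{-1,1}ⁿ`. -/
noncomputable def rsign (b : Bool) : ℝ := if b then 1 else -1

/-- The `j`-th partial difference operator
`∂ⱼ f(ε) = (f(ε) - f(ε₁,…,ε_{j-1},-ε_j,ε_{j+1},…,ε_n))/2` on the discrete cube. -/
noncomputable def discDeriv {X : Type u} [NormedAddCommGroup X] [NormedSpace ℝ X] {n : ℕ}
    (f : (Fin n → Bool) → X) (j : Fin n) (ε : Fin n → Bool) : X :=
  (2 : ℝ)⁻¹ • (f ε - f (Function.update ε j (!ε j)))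

/-!
Let `E_A f` denote the average of `f` over the coordinates in `A`. For every set `A` of
coordinates, `∑_{i ∈ A} (E_{A ∖ i} f - E_A f)(ε) = 𝔼_δ ∑_{i ∈ A} δᵢ ∂ᵢf(δ ·_A ε)`, where `δ ·_A ε`
multiplies `ε` by `δ` on `A`. As `(ε, δ) ↦ (δ ·_A ε, δ)` preserves the uniform measure, Jensen's
inequality and the contraction principle bound the `L^q` norm of this sum by the `L^q` norm `K` of
`∑ᵢ δᵢ ∂ᵢf(ε)`. Averaging `f - E_A f = (f - E_{A ∖ i} f) + (E_{A ∖ i} f - E_A f)` over `i ∈ A` then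
gives, by induction on `|A|`, the bound `‖f - E_A f‖ ≤ (1 + 1/2 + ⋯ + 1/|A|) K`.
-/

section LqMean

variable {α β X : Type*} [Fintype α] [Fintype β] [SeminormedAddCommGroup X] {q : ℝ}

/-- The normalized `L^q` norm `(𝔼ₐ ‖g a‖^q)^{1/q}` of a vector-valued function, where `a` is
uniformly distributed over a finite type. -/
noncomputable def lqMean (q : ℝ) (g : α → X) : ℝ :=
  ((Fintype.card α : ℝ)⁻¹ * ∑ a, ‖g a‖ ^ q) ^ (1 / q)

lemma lqMean_eq_mul (q : ℝ) (g : α → X) :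
    lqMean q g = (Fintype.card α : ℝ)⁻¹ ^ (1 / q) * (∑ a, ‖g a‖ ^ q) ^ (1 / q) :=
  Real.mul_rpow (by positivity) (by positivity)

lemma lqMean_add_le (hq : 1 ≤ q) (g h : α → X) :
    lqMean q (g + h) ≤ lqMean q g + lqMean q h := by
  rw [lqMean_eq_mul, lqMean_eq_mul, lqMean_eq_mul, ← mul_add]
  gcongr
  calc (∑ a, ‖(g + h) a‖ ^ q) ^ (1 / q)
      ≤ (∑ a, (‖g a‖ + ‖h a‖) ^ q) ^ (1 / q) := by
        gcongr with a
        exact norm_add_le (g a) (h a)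
    _ ≤ (∑ a, ‖g a‖ ^ q) ^ (1 / q) + (∑ a, ‖h a‖ ^ q) ^ (1 / q) :=
        Real.Lp_add_le_of_nonneg _ hq (fun _ _ => norm_nonneg _) (fun _ _ => norm_nonneg _)

lemma lqMean_smul [NormedSpace ℝ X] (hq : q ≠ 0) (c : ℝ) (g : α → X) :
    lqMean q (c • g) = ‖c‖ * lqMean q g := by
  have sum_smul : ∑ a, ‖(c • g) a‖ ^ q = ‖c‖ ^ q * ∑ a, ‖g a‖ ^ q := by
    simp only [Pi.smul_apply, norm_smul, Real.mul_rpow (norm_nonneg _) (norm_nonneg _),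
      Finset.mul_sum]
  rw [lqMean, sum_smul, mul_left_comm, Real.mul_rpow (by positivity) (by positivity), one_div,
    Real.rpow_rpow_inv (norm_nonneg c) hq, lqMean, one_div]

lemma lqMean_comp_equiv (e : α ≃ β) (g : β → X) : lqMean q (g ∘ e) = lqMean q g := by
  simp only [lqMean, Fintype.card_congr e, Function.comp_apply, e.sum_comp fun b => ‖g b‖ ^ q]

lemma lqMean_prod (g : α × β → X) :
    lqMean q g = ((Fintype.card α : ℝ)⁻¹ *
      ∑ a, (Fintype.card β : ℝ)⁻¹ * ∑ b, ‖g (a, b)‖ ^ q) ^ (1 / q) := by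
  rw [lqMean, Fintype.card_prod, Nat.cast_mul, mul_inv, mul_assoc, Fintype.sum_prod_type,
    Finset.mul_sum]

variable [NormedSpace ℝ X]

/-- `lqMean q`, bundled as a seminorm for `1 ≤ q`. -/
noncomputable def lqSeminorm (α X : Type*) [Fintype α] [SeminormedAddCommGroup X]
    [NormedSpace ℝ X] (hq : 1 ≤ q) : Seminorm ℝ (α → X) :=
  Seminorm.of (lqMean q) (lqMean_add_le hq) (lqMean_smul (zero_lt_one.trans_le hq).ne')

lemma lqSeminorm_apply (hq : 1 ≤ q) (g : α → X) : lqSeminorm α X hq g = lqMean q g :=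
  rfl

lemma norm_average_rpow_le [Nonempty β] (hq : 1 ≤ q) (g : β → X) :
    ‖(Fintype.card β : ℝ)⁻¹ • ∑ b, g b‖ ^ q ≤ (Fintype.card β : ℝ)⁻¹ * ∑ b, ‖g b‖ ^ q := by
  calc ‖(Fintype.card β : ℝ)⁻¹ • ∑ b, g b‖ ^ q
      ≤ (∑ b, (Fintype.card β : ℝ)⁻¹ * ‖g b‖) ^ q := by
        rw [norm_smul, norm_inv, Real.norm_natCast, ← Finset.mul_sum]
        gcongr
        exact norm_sum_le _ _
    _ ≤ ∑ b, (Fintype.card β : ℝ)⁻¹ * ‖g b‖ ^ q :=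
        Real.rpow_arith_mean_le_arith_mean_rpow _ _ _ (fun _ _ => by positivity) (by simp)
          (fun _ _ => norm_nonneg _) hq
    _ = (Fintype.card β : ℝ)⁻¹ * ∑ b, ‖g b‖ ^ q := (Finset.mul_sum ..).symm

lemma lqMean_average_le [Nonempty β] (hq : 1 ≤ q) (g : α × β → X) :
    lqMean q (fun a => (Fintype.card β : ℝ)⁻¹ • ∑ b, g (a, b)) ≤ lqMean q g := by
  rw [lqMean_prod, lqMean]
  gcongr with a
  exact norm_average_rpow_le hq fun b => g (a, b)

end LqMean

lemma seminorm_sub_le_harmonic_mul {ι V : Type*} [DecidableEq ι] [AddCommGroup V] [Module ℝ V]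
    (N : Seminorm ℝ V) (T : Finset ι → V) {K : ℝ}
    (hK : ∀ A, N (∑ i ∈ A, (T (A.erase i) - T A)) ≤ K) (A : Finset ι) :
    N (T ∅ - T A) ≤ harmonic A.card * K := by
  induction hcard : A.card generalizing A with
  | zero => simp [Finset.card_eq_zero.mp hcard]
  | succ k ih =>
    have telescope : ((k : ℝ) + 1) • (T ∅ - T A) =
        ∑ i ∈ A, (T ∅ - T (A.erase i)) + ∑ i ∈ A, (T (A.erase i) - T A) := by
      rw [← Finset.sum_add_distrib]
      simp only [sub_add_sub_cancel, Finset.sum_const, hcard, ← Nat.cast_smul_eq_nsmul ℝ,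
        Nat.cast_succ]
    have erased_le : N (∑ i ∈ A, (T ∅ - T (A.erase i))) ≤ ((k : ℝ) + 1) * (harmonic k * K) :=
      calc N (∑ i ∈ A, (T ∅ - T (A.erase i)))
          ≤ ∑ i ∈ A, N (T ∅ - T (A.erase i)) :=
            Finset.le_sum_of_subadditive N (map_zero N).le (map_add_le_add N) _ _
        _ ≤ ∑ _i ∈ A, harmonic k * K :=
            Finset.sum_le_sum fun i hi => ih _ (by rw [Finset.card_erase_of_mem hi, hcard]; rfl)
        _ = ((k : ℝ) + 1) * (harmonic k * K) := by simp [hcard]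
    have scaled : ((k : ℝ) + 1) * N (T ∅ - T A) ≤ ((k : ℝ) + 1) * (harmonic k * K) + K :=
      calc ((k : ℝ) + 1) * N (T ∅ - T A)
          = N (((k : ℝ) + 1) • (T ∅ - T A)) := by
            rw [map_smul_eq_mul, Real.norm_of_nonneg (by positivity)]
        _ ≤ ((k : ℝ) + 1) * (harmonic k * K) + K := by
            rw [telescope]
            exact (map_add_le_add N _ _).trans (add_le_add erased_le (hK A))
    have hk : (0 : ℝ) < k + 1 := by positivity
    refine le_of_mul_le_mul_left (scaled.trans_eq ?_) hk
    rw [harmonic_succ]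
    push_cast
    field_simp

lemma harmonic_le_three_mul_log {n : ℕ} (hn : 2 ≤ n) : (harmonic n : ℝ) ≤ 3 * Real.log n := by
  have log_two_le : Real.log 2 ≤ Real.log n :=
    Real.log_le_log (by norm_num) (by exact_mod_cast hn)
  linarith [harmonic_le_one_add_log n, Real.log_two_gt_d9]

lemma rsign_not (b : Bool) : rsign (!b) = -rsign b := by
  cases b <;> simp [rsign]

lemma involutive_update_not {ι : Type*} [DecidableEq ι] (i : ι) :
    Function.Involutive fun δ : ι → Bool => Function.update δ i (!δ i) := fun δ => by
  simp

section SignMulOn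

variable {ι : Type*} [DecidableEq ι] (A : Finset ι) (δ ε : ι → Bool)

/-- Multiply the signs `ε` by the signs `δ` on the coordinates in `A`. Since `true` stands
for `1` and `false` for `-1`, the product of two signs is the Boolean `==`. -/
def signMulOn : ι → Bool :=
  A.piecewise (fun i => δ i == ε i) ε

lemma signMulOn_involutive : Function.Involutive (signMulOn A δ) := fun ε => by
  funext i
  by_cases hi : i ∈ A <;> cases hδ : δ i <;> simp [signMulOn, hi, hδ]

lemma signMulOn_empty : signMulOn ∅ δ ε = ε :=
  Finset.piecewise_empty ..

lemma signMulOn_univ_comm [Fintype ι] :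
    signMulOn Finset.univ δ ε = signMulOn Finset.univ ε δ := by
  funext i
  simp [signMulOn, Bool.beq_comm]

lemma signMulOn_erase (i : ι) :
    signMulOn (A.erase i) δ ε = signMulOn A (Function.update δ i true) ε := by
  funext j
  by_cases hj : j = i
  · subst hj
    simp [signMulOn, Finset.piecewise]
  · simp [signMulOn, Finset.piecewise, hj]

variable {A} in
lemma update_not_signMulOn {i : ι} (hi : i ∈ A) :
    Function.update (signMulOn A δ ε) i (!signMulOn A δ ε i) =
      signMulOn A (Function.update δ i (!δ i)) ε := by
  funext j
  by_cases hj : j = i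
  · subst hj
    cases hδ : δ j <;> simp [signMulOn, hi, hδ]
  · simp [signMulOn, Finset.piecewise, hj]

end SignMulOn

section RademacherSum

variable {ι α X : Type*}

/-- The function `(a, δ) ↦ ∑_{i ∈ A} δᵢ vᵢ(a)` of a parameter `a` and signs `δ`. -/
noncomputable def rademacherSum [AddCommGroup X] [Module ℝ X] (A : Finset ι) (v : ι → α → X) :
    α × (ι → Bool) → X :=
  fun p => ∑ i ∈ A, rsign (p.2 i) • v i p.1

variable [Fintype ι] [DecidableEq ι]

lemma rademacherSum_eq_half_smul_add_flip [AddCommGroup X] [Module ℝ X] (A : Finset ι)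
    (v : ι → α → X) :
    rademacherSum A v = (2⁻¹ : ℝ) • (rademacherSum Finset.univ v +
      rademacherSum Finset.univ v ∘ Prod.map id (signMulOn Aᶜ fun _ => false)) := by
  funext ⟨a, δ⟩
  simp only [rademacherSum, Pi.smul_apply, Pi.add_apply, Function.comp_apply, Prod.map_apply,
    id_eq, ← Finset.sum_add_distrib, Finset.smul_sum]
  rw [← Finset.sum_subset A.subset_univ]
  · refine Finset.sum_congr rfl fun i hi => ?_
    simp only [signMulOn, Finset.piecewise, Finset.mem_compl, hi, not_true, if_false]
    module
  · intro i _ hi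
    simp only [signMulOn, Finset.piecewise, Finset.mem_compl, hi, not_false_iff, if_true,
      Bool.false_beq, rsign_not]
    module

lemma lqMean_rademacherSum_le [Fintype α] [SeminormedAddCommGroup X] [NormedSpace ℝ X] {q : ℝ}
    (hq : 1 ≤ q) (A : Finset ι) (v : ι → α → X) :
    lqMean q (rademacherSum A v) ≤ lqMean q (rademacherSum Finset.univ v) := by
  let e : α × (ι → Bool) ≃ α × (ι → Bool) :=
    (Equiv.refl α).prodCongr (signMulOn_involutive Aᶜ fun _ => false).toPerm
  calc lqMean q (rademacherSum A v)
      = 2⁻¹ * lqMean q (rademacherSum Finset.univ v + rademacherSum Finset.univ v ∘ e) := by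
        rw [rademacherSum_eq_half_smul_add_flip, lqMean_smul (zero_lt_one.trans_le hq).ne',
          Real.norm_of_nonneg (by norm_num)]
        rfl
    _ ≤ 2⁻¹ * (lqMean q (rademacherSum Finset.univ v) +
          lqMean q (rademacherSum Finset.univ v ∘ e)) := by
        gcongr
        exact lqMean_add_le hq _ _
    _ = lqMean q (rademacherSum Finset.univ v) := by
        rw [lqMean_comp_equiv]
        ring

end RademacherSum

section CoordAverage

variable {ι X : Type*} [Fintype ι] [DecidableEq ι] [AddCommGroup X] [Module ℝ X]

/-- The average of `f` over the coordinates in `A`, the other coordinates being kept fixed,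
i.e. the conditional expectation of `f` given the coordinates outside `A`. The average runs over
all sign vectors `δ`, whose coordinates outside `A` are irrelevant. -/
noncomputable def coordAverage (f : (ι → Bool) → X) (A : Finset ι) (ε : ι → Bool) : X :=
  (Fintype.card (ι → Bool) : ℝ)⁻¹ • ∑ δ, f (signMulOn A δ ε)

lemma coordAverage_empty (f : (ι → Bool) → X) : coordAverage f ∅ = f := by
  funext ε
  simp only [coordAverage, signMulOn_empty, Finset.sum_const, Finset.card_univ,
    ← Nat.cast_smul_eq_nsmul ℝ]
  exact inv_smul_smul₀ (Nat.cast_ne_zero.mpr Fintype.card_ne_zero) _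

lemma coordAverage_univ (f : (ι → Bool) → X) (ε : ι → Bool) :
    coordAverage f Finset.univ ε = (Fintype.card (ι → Bool) : ℝ)⁻¹ • ∑ δ, f δ := by
  simp only [coordAverage, signMulOn_univ_comm _ ε]
  rw [(signMulOn_involutive Finset.univ ε).bijective.sum_comp f]

end CoordAverage

section DiscDeriv

variable {n : ℕ} {X : Type*} [NormedAddCommGroup X] [NormedSpace ℝ X]

lemma rsign_smul_discDeriv (g : (Fin n → Bool) → X) (i : Fin n) (δ : Fin n → Bool) :
    rsign (δ i) • discDeriv g i δ = g (Function.update δ i true) -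
      (2⁻¹ : ℝ) • (g δ + g (Function.update δ i (!δ i))) := by
  cases hδ : δ i
  · simp only [discDeriv, hδ, rsign, Bool.not_false, Bool.false_eq_true, if_false]
    module
  · simp only [discDeriv, hδ, rsign, Bool.not_true, if_true]
    have update_true : Function.update δ i true = δ := Function.update_eq_self_iff.mpr hδ.symm
    rw [update_true]
    module

lemma sum_rsign_smul_discDeriv (g : (Fin n → Bool) → X) (i : Fin n) :
    ∑ δ, rsign (δ i) • discDeriv g i δ =
      ∑ δ, g (Function.update δ i true) - ∑ δ, g δ := by
  simp only [rsign_smul_discDeriv, Finset.sum_sub_distrib, ← Finset.smul_sum,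
    Finset.sum_add_distrib]
  rw [(involutive_update_not i).bijective.sum_comp g]
  module

lemma discDeriv_signMulOn (f : (Fin n → Bool) → X) {A : Finset (Fin n)} {i : Fin n} (hi : i ∈ A)
    (δ ε : Fin n → Bool) :
    discDeriv f i (signMulOn A δ ε) = discDeriv (fun δ => f (signMulOn A δ ε)) i δ := by
  simp only [discDeriv, update_not_signMulOn δ ε hi]

lemma coordAverage_erase_sub (f : (Fin n → Bool) → X) {A : Finset (Fin n)} {i : Fin n}
    (hi : i ∈ A) (ε : Fin n → Bool) :
    coordAverage f (A.erase i) ε - coordAverage f A ε =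
      (Fintype.card (Fin n → Bool) : ℝ)⁻¹ •
        ∑ δ : Fin n → Bool, rsign (δ i) • discDeriv f i (signMulOn A δ ε) := by
  simp only [discDeriv_signMulOn f hi, coordAverage, signMulOn_erase, ← smul_sub]
  rw [sum_rsign_smul_discDeriv fun δ => f (signMulOn A δ ε)]

lemma sum_coordAverage_erase_sub (f : (Fin n → Bool) → X) (A : Finset (Fin n)) :
    ∑ i ∈ A, (coordAverage f (A.erase i) - coordAverage f A) = fun ε =>
      (Fintype.card (Fin n → Bool) : ℝ)⁻¹ •
        ∑ δ, rademacherSum A (discDeriv f) (signMulOn A δ ε, δ) := by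
  funext ε
  simp only [rademacherSum]
  rw [Finset.sum_apply, Finset.sum_comm, Finset.smul_sum]
  exact Finset.sum_congr rfl fun i hi => coordAverage_erase_sub f hi ε

lemma lqMean_sum_coordAverage_erase_sub_le {q : ℝ} (hq : 1 ≤ q) (f : (Fin n → Bool) → X)
    (A : Finset (Fin n)) :
    lqMean q (∑ i ∈ A, (coordAverage f (A.erase i) - coordAverage f A)) ≤
      lqMean q (rademacherSum Finset.univ (discDeriv f)) := by
  have shear_involutive : Function.Involutive
      fun p : (Fin n → Bool) × (Fin n → Bool) => (signMulOn A p.2 p.1, p.2) :=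
    fun p => Prod.ext (signMulOn_involutive A p.2 p.1) rfl
  calc lqMean q (∑ i ∈ A, (coordAverage f (A.erase i) - coordAverage f A))
      ≤ lqMean q (rademacherSum A (discDeriv f) ∘ shear_involutive.toPerm) := by
        rw [sum_coordAverage_erase_sub]
        exact lqMean_average_le hq (rademacherSum A (discDeriv f) ∘ shear_involutive.toPerm)
    _ = lqMean q (rademacherSum A (discDeriv f)) := lqMean_comp_equiv _ _
    _ ≤ lqMean q (rademacherSum Finset.univ (discDeriv f)) := lqMean_rademacherSum_le hq A _

lemma lqMean_sub_coordAverage_le {q : ℝ} (hq : 1 ≤ q) (f : (Fin n → Bool) → X)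
    (A : Finset (Fin n)) :
    lqMean q (f - coordAverage f A) ≤
      harmonic A.card * lqMean q (rademacherSum Finset.univ (discDeriv f)) := by
  have h := seminorm_sub_le_harmonic_mul (lqSeminorm (Fin n → Bool) X hq) (coordAverage f)
    (lqMean_sum_coordAverage_erase_sub_le hq f) A
  rwa [coordAverage_empty, lqSeminorm_apply] at h

end DiscDeriv

theorem pisier_inequality_general {X : Type*} [NormedAddCommGroup X] [NormedSpace ℝ X]
    {q : ℝ} (hq : 1 ≤ q) {n : ℕ} (f : (Fin n → Bool) → X) :
    (((2 : ℝ) ^ n)⁻¹ * ∑ ε : Fin n → Bool,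
        ‖f ε - ((2 : ℝ) ^ n)⁻¹ • ∑ δ : Fin n → Bool, f δ‖ ^ q) ^ (1 / q) ≤
      harmonic n *
        (((2 : ℝ) ^ n)⁻¹ * ∑ ε : Fin n → Bool, ((2 : ℝ) ^ n)⁻¹ * ∑ δ : Fin n → Bool,
          ‖∑ i : Fin n, rsign (δ i) • discDeriv f i ε‖ ^ q) ^ (1 / q) := by
  have card_cube : (Fintype.card (Fin n → Bool) : ℝ) = 2 ^ n := by simp
  have h := lqMean_sub_coordAverage_le hq f Finset.univ
  rw [lqMean_prod, Finset.card_fin] at h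
  simpa only [lqMean, rademacherSum, Pi.sub_apply, coordAverage_univ, card_cube] using h

/-- **Pisier's inequality.** There is a universal constant `C > 0` such that for every Banach
space `X`, every `q ∈ [1,∞)`, every integer `n ≥ 2` and every `f : {-1,1}ⁿ → X`,
`(𝔼_ε ‖f(ε) - 𝔼_δ f(δ)‖^q)^{1/q} ≤ C (log n) (𝔼_ε 𝔼_δ ‖∑ᵢ δᵢ ∂ᵢ f(ε)‖^q)^{1/q}`. -/
theorem pisier_inequality :
    ∃ C : ℝ, 0 < C ∧
      ∀ (X : Type u) [NormedAddCommGroup X] [NormedSpace ℝ X] [CompleteSpace X],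
        ∀ q : ℝ, 1 ≤ q → ∀ n : ℕ, 2 ≤ n → ∀ f : (Fin n → Bool) → X,
          (((2 : ℝ) ^ n)⁻¹ * ∑ ε : Fin n → Bool,
              ‖f ε - ((2 : ℝ) ^ n)⁻¹ • ∑ δ : Fin n → Bool, f δ‖ ^ q) ^ (1 / q) ≤
            C * Real.log (n : ℝ) *
              (((2 : ℝ) ^ n)⁻¹ * ∑ ε : Fin n → Bool, ((2 : ℝ) ^ n)⁻¹ * ∑ δ : Fin n → Bool,
                ‖∑ i : Fin n, rsign (δ i) • discDeriv f i ε‖ ^ q) ^ (1 / q) :=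
  ⟨3, three_pos, fun _X _ _ _ _q hq _n hn f => (pisier_inequality_general hq f).trans <|
    mul_le_mul_of_nonneg_right (harmonic_le_three_mul_log hn) (by positivity)⟩
end

section
/- There exists a universal constant c ∈ (0,∞) such that the following holds. Let (X,‖·‖_X) be a Banach space with Rademacher type p ∈ (1,2] with constant T. Then for every integer n ≥ 2 and every f : {−1,1}^n → X, E_ε[‖f(ε) − f(−ε)‖_X] ≤ c T (log n) (Σ_{i=1}^n E_ε[‖f(ε) − f(ε_1,…,ε_{i−1},−ε_i,ε_{i+1},…,ε_n)‖_X^p])^{1/p}, where E_ε denotes the average over a uniformly random ε ∈ {−1,1}^n. -/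
open scoped BigOperators

universe u

/-!
Let `N_ρ` be the noise operator on functions on the cube, with one correlation parameter per
coordinate; it multiplies the Walsh function `χ_S` by `∏_{i ∈ S} ρ i`. Its kernel is affine in each
`ρ i`, so for independent uniform signs `d` the average of `d i • N_{r + (1 - r) d}` is
`(1 - r) ∂ᵢ N_r`. As `∂ᵢ N_r` only sees the part of `f` that is odd in the `i`-th coordinate,
`(1 - r) (d/dr) N_r f` is the average over `d` of `N_{r + (1 - r) d} (∑ i, d i • D i f) / 2`, where
`D i f` is the difference of `f` along the `i`-th coordinate. Since `r + (1 - r) d` takes values in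
`[-1, 1]`, each of these operators is an `L¹` contraction. Integrating over `[0, r]` bounds
`N_r f - N_0 f` by `log (1 / (1 - r))` times the Rademacher averages of the differences of `f`,
and applying `N_{1/r}`, whose `L¹` norm is at most `r⁻ⁿ`, recovers `f - N_0 f`. The choice
`r = 1 - 1/n` gives Pisier's inequality with a logarithmic factor; type `p` and Jensen's inequality
finish the proof.
-/

lemma inv_one_sub_inv_pow_le_exp_two {n : ℕ} (hn : 2 ≤ n) :
    (1 - (n : ℝ)⁻¹)⁻¹ ^ n ≤ Real.exp 2 := by
  have two_le : (2 : ℝ) ≤ n := by exact_mod_cast hn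
  have sub_one_pos : (0 : ℝ) < n - 1 := by linarith
  have inv_eq : (1 - (n : ℝ)⁻¹)⁻¹ = 1 / ((n : ℝ) - 1) + 1 := by
    field_simp
    ring
  calc (1 - (n : ℝ)⁻¹)⁻¹ ^ n ≤ Real.exp (1 / ((n : ℝ) - 1)) ^ n := by
        rw [inv_eq]
        gcongr
        exact Real.add_one_le_exp _
    _ = Real.exp (n * (1 / ((n : ℝ) - 1))) := (Real.exp_nat_mul _ _).symm
    _ ≤ Real.exp 2 := by
        gcongr
        rw [mul_one_div, div_le_iff₀ sub_one_pos]
        linarith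

section FiniteSums

variable {κ X : Type*} [Fintype κ] [NormedAddCommGroup X]

lemma sum_norm_sub_comp_perm_le (σ : Equiv.Perm κ) (f : κ → X) (x : X) :
    ∑ i, ‖f i - f (σ i)‖ ≤ 2 * ∑ i, ‖f i - x‖ := by
  calc ∑ i, ‖f i - f (σ i)‖ ≤ ∑ i, (‖f i - x‖ + ‖f (σ i) - x‖) := by
        gcongr with i
        rw [← sub_sub_sub_cancel_right _ _ x]
        exact norm_sub_le _ _
    _ = 2 * ∑ i, ‖f i - x‖ := by
        rw [Finset.sum_add_distrib, Equiv.sum_comp σ fun i => ‖f i - x‖, two_mul]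

lemma sum_norm_image_sub_le_of_sum_norm_deriv_le [NormedSpace ℝ X] {F F' : ℝ → κ → X}
    {B B' : ℝ → ℝ} {a b : ℝ} (hab : a ≤ b)
    (hF : ∀ t ∈ Set.Icc a b, HasDerivAt F (F' t) t)
    (hB : ∀ t ∈ Set.Icc a b, HasDerivAt B (B' t) t)
    (bound : ∀ t ∈ Set.Icc a b, ∑ i, ‖F' t i‖ ≤ B' t) :
    ∑ i, ‖F b i - F a i‖ ≤ B b - B a := by
  let G (t : ℝ) : PiLp 1 fun _ : κ => X := WithLp.toLp 1 (F t - F a)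
  have hG (t : ℝ) (ht : t ∈ Set.Icc a b) : HasDerivAt G (WithLp.toLp 1 (F' t)) t :=
    (PiLp.hasFDerivAt_toLp (𝕜 := ℝ) 1 _).comp_hasDerivAt t ((hF t ht).sub_const (F a))
  have norm_G_le : ‖G b‖ ≤ B b - B a :=
    image_norm_le_of_norm_deriv_right_le_deriv_boundary' (B := fun t => B t - B a)
      (fun t ht => (hG t ht).continuousAt.continuousWithinAt)
      (fun t ht => (hG t (Set.Ico_subset_Icc_self ht)).hasDerivWithinAt)
      (by simp [G])
      (fun t ht => ((hB t ht).sub_const (B a)).continuousAt.continuousWithinAt)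
      (fun t ht => ((hB t (Set.Ico_subset_Icc_self ht)).sub_const (B a)).hasDerivWithinAt)
      (fun t ht => by
        simpa only [PiLp.norm_eq_of_L1] using bound t (Set.Ico_subset_Icc_self ht))
      (Set.right_mem_Icc.2 hab)
  exact (PiLp.norm_eq_of_L1 (G b)).symm.trans_le norm_G_le

end FiniteSums

lemma abs_rsign (b : Bool) : |rsign b| = 1 := by
  cases b <;> simp [rsign]

/-- The transition probability from `a` to `b` when one sign is replaced by a copy with
correlation `ρ`. It is also used for `|ρ| > 1`, where it takes negative values. -/
noncomputable def bitKernel (ρ : ℝ) (a b : Bool) : ℝ := (1 + ρ * (rsign a * rsign b)) / 2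

lemma sum_bitKernel_mul_bitKernel (ρ σ : ℝ) (a b : Bool) :
    ∑ c, bitKernel ρ a c * bitKernel σ c b = bitKernel (ρ * σ) a b := by
  cases a <;> cases b <;> simp [bitKernel, rsign] <;> ring

lemma bitKernel_one (a b : Bool) : bitKernel 1 a b = if a = b then 1 else 0 := by
  cases a <;> cases b <;> norm_num [bitKernel, rsign]

lemma sum_abs_bitKernel (ρ : ℝ) (b : Bool) : ∑ a, |bitKernel ρ a b| = max 1 |ρ| := by
  have abs_add_abs : |(1 + ρ) / 2| + |(1 + -ρ) / 2| = max 1 |ρ| := by grind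
  cases b <;> simpa [bitKernel, rsign, add_comm] using abs_add_abs

lemma hasDerivAt_bitKernel (a b : Bool) (ρ : ℝ) :
    HasDerivAt (fun t => bitKernel t a b) (rsign a * rsign b / 2) ρ := by
  simpa only [bitKernel, id, one_mul] using
    (((hasDerivAt_id ρ).mul_const (rsign a * rsign b)).const_add 1).div_const 2

section Cube

variable {ι : Type*} [Fintype ι]

/-! ### The kernel on the cube -/

/-- The kernel of the noise operator on `{-1,1}^ι`, with correlation `ρ i` at coordinate `i`. -/
noncomputable def noiseKernel (ρ : ι → ℝ) (ε δ : ι → Bool) : ℝ :=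
  ∏ i, bitKernel (ρ i) (ε i) (δ i)

lemma noiseKernel_one (ε δ : ι → Bool) : noiseKernel 1 ε δ = if ε = δ then 1 else 0 := by
  simp only [noiseKernel, Pi.one_apply, bitKernel_one, Fintype.prod_ite_zero, Finset.prod_const_one,
    funext_iff]

variable [DecidableEq ι]

/-- The partial derivative of `noiseKernel ρ ε δ` with respect to `ρ i`. -/
noncomputable def noiseKernelPartial (ρ : ι → ℝ) (i : ι) (ε δ : ι → Bool) : ℝ :=
  rsign (ε i) * rsign (δ i) / 2 * ∏ j ∈ Finset.univ.erase i, bitKernel (ρ j) (ε j) (δ j)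

lemma sum_noiseKernel_mul_noiseKernel (ρ σ : ι → ℝ) (ε ζ : ι → Bool) :
    ∑ δ, noiseKernel ρ ε δ * noiseKernel σ δ ζ = noiseKernel (ρ * σ) ε ζ := by
  simp only [noiseKernel, ← Finset.prod_mul_distrib, Pi.mul_apply, ← sum_bitKernel_mul_bitKernel]
  exact (Fintype.prod_sum fun i c => bitKernel (ρ i) (ε i) c * bitKernel (σ i) c (ζ i)).symm

lemma sum_abs_noiseKernel (ρ : ι → ℝ) (δ : ι → Bool) :
    ∑ ε, |noiseKernel ρ ε δ| = ∏ i, max 1 |ρ i| := by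
  simp only [noiseKernel, Finset.abs_prod]
  rw [← Fintype.prod_sum fun i a => |bitKernel (ρ i) a (δ i)|]
  simp only [sum_abs_bitKernel]

lemma hasDerivAt_noiseKernel_diag (ε δ : ι → Bool) (r : ℝ) :
    HasDerivAt (fun t => noiseKernel (fun _ => t) ε δ)
      (∑ i, noiseKernelPartial (fun _ => r) i ε δ) r := by
  simpa only [noiseKernel, noiseKernelPartial, smul_eq_mul, mul_comm] using
    HasDerivAt.fun_finsetProd fun i (_ : i ∈ Finset.univ) => hasDerivAt_bitKernel (ε i) (δ i) r

lemma noiseKernelPartial_update_not (ρ : ι → ℝ) (i : ι) (ε δ : ι → Bool) :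
    noiseKernelPartial ρ i ε (Function.update δ i (!δ i)) = -noiseKernelPartial ρ i ε δ := by
  have other_coords : ∏ j ∈ Finset.univ.erase i,
        bitKernel (ρ j) (ε j) (Function.update δ i (!δ i) j) =
      ∏ j ∈ Finset.univ.erase i, bitKernel (ρ j) (ε j) (δ j) :=
    Finset.prod_congr rfl fun j hj => by rw [Function.update_of_ne (Finset.ne_of_mem_erase hj)]
  rw [noiseKernelPartial, other_coords, Function.update_self, rsign_not, noiseKernelPartial]
  ring

-- Affineness in each `ρ j`: averaging over `d j` kills the perturbation for `j ≠ i`, and the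
-- factor `d i` picks out the slope in `ρ i`.
lemma sum_rsign_mul_noiseKernel (ρ η : ι → ℝ) (i : ι) (ε δ : ι → Bool) :
    ∑ d : ι → Bool, rsign (d i) * noiseKernel (fun j => ρ j + η j * rsign (d j)) ε δ =
      2 ^ Fintype.card ι * η i * noiseKernelPartial ρ i ε δ := by
  let g (j : ι) (b : Bool) : ℝ :=
    (if j = i then rsign b else 1) * bitKernel (ρ j + η j * rsign b) (ε j) (δ j)
  have sum_self : ∑ b, g i b = 2 * (η i * (rsign (ε i) * rsign (δ i) / 2)) := by
    simp only [g, bitKernel, rsign, Fintype.sum_bool, if_true, Bool.false_eq_true, if_false]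
    ring
  have sum_other (j : ι) (hj : j ∈ Finset.univ.erase i) :
      ∑ b, g j b = 2 * bitKernel (ρ j) (ε j) (δ j) := by
    simp only [g, bitKernel, rsign, Fintype.sum_bool, if_true, Bool.false_eq_true, if_false,
      if_neg (Finset.ne_of_mem_erase hj)]
    ring
  calc ∑ d : ι → Bool, rsign (d i) * noiseKernel (fun j => ρ j + η j * rsign (d j)) ε δ
      = ∑ d : ι → Bool, ∏ j, g j (d j) := by
        simp only [g, noiseKernel, Finset.prod_mul_distrib, Finset.prod_ite_eq', Finset.mem_univ,
          if_true]
    _ = (∑ b, g i b) * ∏ j ∈ Finset.univ.erase i, ∑ b, g j b := by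
        rw [← Fintype.prod_sum, Finset.mul_prod_erase _ (∑ b, g · b) (Finset.mem_univ i)]
    _ = (2 * ∏ _j ∈ Finset.univ.erase i, 2) * η i * noiseKernelPartial ρ i ε δ := by
        rw [sum_self, Finset.prod_congr rfl sum_other, Finset.prod_mul_distrib, noiseKernelPartial]
        ring
    _ = 2 ^ Fintype.card ι * η i * noiseKernelPartial ρ i ε δ := by
        rw [Finset.mul_prod_erase _ (fun _ => (2 : ℝ)) (Finset.mem_univ i), Finset.prod_const,
          Finset.card_univ]

/-! ### The noise operator -/

section Algebra

variable {X : Type*} [AddCommGroup X] [Module ℝ X]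

/-- The noise operator on `X`-valued functions on the cube, with correlation `ρ i` at coordinate
`i`. It is a Markov operator when `|ρ i| ≤ 1`, but `ρ` is arbitrary, so that it can be inverted. -/
noncomputable def noiseOp (ρ : ι → ℝ) : ((ι → Bool) → X) →ₗ[ℝ] ((ι → Bool) → X) where
  toFun f ε := ∑ δ, noiseKernel ρ ε δ • f δ
  map_add' f g := by ext ε; simp [smul_add, Finset.sum_add_distrib]
  map_smul' c f := by ext ε; simp [smul_comm _ c, Finset.smul_sum]

/-- The partial derivative of the noise operator `noiseOp ρ` with respect to `ρ i`. -/
noncomputable def noiseOpPartial (ρ : ι → ℝ) (i : ι) (f : (ι → Bool) → X) (ε : ι → Bool) : X :=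
  ∑ δ, noiseKernelPartial ρ i ε δ • f δ

/-- The unnormalized discrete derivative of `f` in the direction of coordinate `i`. -/
def coordDiff (i : ι) (f : (ι → Bool) → X) (ε : ι → Bool) : X :=
  f ε - f (Function.update ε i (!ε i))

lemma noiseOp_apply (ρ : ι → ℝ) (f : (ι → Bool) → X) (ε : ι → Bool) :
    noiseOp ρ f ε = ∑ δ, noiseKernel ρ ε δ • f δ := rfl

lemma noiseOp_noiseOp (ρ σ : ι → ℝ) (f : (ι → Bool) → X) :
    noiseOp ρ (noiseOp σ f) = noiseOp (ρ * σ) f := by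
  ext ε
  simp only [noiseOp_apply, Finset.smul_sum, smul_smul]
  rw [Finset.sum_comm]
  simp only [← Finset.sum_smul, sum_noiseKernel_mul_noiseKernel]

lemma noiseOp_one (f : (ι → Bool) → X) : noiseOp 1 f = f := by
  ext ε
  simp [noiseOp_apply, noiseKernel_one]

lemma noiseOp_zero_apply_eq (f : (ι → Bool) → X) (ε ζ : ι → Bool) :
    noiseOp 0 f ε = noiseOp 0 f ζ := by
  simp [noiseOp_apply, noiseKernel, bitKernel]

lemma noiseOpPartial_coordDiff (ρ : ι → ℝ) (i : ι) (f : (ι → Bool) → X) :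
    noiseOpPartial ρ i (coordDiff i f) = (2 : ℝ) • noiseOpPartial ρ i f := by
  ext ε
  have flip_involutive :
      Function.Involutive fun δ : ι → Bool => Function.update δ i (!δ i) := fun δ => by simp
  have sum_flip : ∑ δ, noiseKernelPartial ρ i ε δ • f (Function.update δ i (!δ i)) =
      -∑ δ, noiseKernelPartial ρ i ε δ • f δ := by
    rw [← Equiv.sum_comp flip_involutive.toPerm fun δ => noiseKernelPartial ρ i ε δ • f δ]
    simp only [Function.Involutive.coe_toPerm, noiseKernelPartial_update_not, neg_smul,
      Finset.sum_neg_distrib, neg_neg]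
  simp only [noiseOpPartial, coordDiff, smul_sub, Finset.sum_sub_distrib, sum_flip, Pi.smul_apply,
    two_smul, sub_neg_eq_add]

lemma sum_rsign_smul_noiseOp (ρ η : ι → ℝ) (i : ι) (f : (ι → Bool) → X) :
    ∑ d : ι → Bool, rsign (d i) • noiseOp (fun j => ρ j + η j * rsign (d j)) f =
      (2 ^ Fintype.card ι * η i) • noiseOpPartial ρ i f := by
  ext ε
  simp only [Finset.sum_apply, Pi.smul_apply, noiseOp_apply, noiseOpPartial, Finset.smul_sum,
    smul_smul]
  rw [Finset.sum_comm]
  simp only [← Finset.sum_smul, sum_rsign_mul_noiseKernel]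

lemma sum_noiseOp_sum_rsign_smul_coordDiff (r s : ℝ) (f : (ι → Bool) → X) :
    ∑ d : ι → Bool, noiseOp (fun j => r + s * rsign (d j)) (∑ i, rsign (d i) • coordDiff i f) =
      (2 ^ Fintype.card ι * s * 2) • ∑ i, noiseOpPartial (fun _ => r) i f := by
  simp only [map_sum, map_smul]
  rw [Finset.sum_comm]
  simp only [sum_rsign_smul_noiseOp (fun _ => r) (fun _ => s), noiseOpPartial_coordDiff, smul_smul,
    Finset.smul_sum]

end Algebra

variable {X : Type*} [NormedAddCommGroup X] [NormedSpace ℝ X]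

lemma hasDerivAt_noiseOp_diag (f : (ι → Bool) → X) (r : ℝ) :
    HasDerivAt (fun t => noiseOp (fun _ => t) f) (∑ i, noiseOpPartial (fun _ => r) i f) r := by
  refine hasDerivAt_pi.2 fun ε => ?_
  simp only [noiseOp_apply, Finset.sum_apply, noiseOpPartial]
  rw [Finset.sum_comm]
  simp only [← Finset.sum_smul]
  exact HasDerivAt.fun_sum fun δ _ => (hasDerivAt_noiseKernel_diag ε δ r).smul_const (f δ)

lemma sum_norm_noiseOp_le (ρ : ι → ℝ) (f : (ι → Bool) → X) :
    ∑ ε, ‖noiseOp ρ f ε‖ ≤ (∏ i, max 1 |ρ i|) * ∑ ε, ‖f ε‖ := by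
  calc ∑ ε, ‖noiseOp ρ f ε‖
      ≤ ∑ ε, ∑ δ, |noiseKernel ρ ε δ| * ‖f δ‖ := by
        gcongr with ε
        exact norm_sum_le_of_le _ fun δ _ => (norm_smul _ _).le
    _ = (∏ i, max 1 |ρ i|) * ∑ ε, ‖f ε‖ := by
        rw [Finset.sum_comm, Finset.mul_sum]
        simp only [← Finset.sum_mul, sum_abs_noiseKernel]

lemma sum_norm_noiseOp_le_sum_norm {ρ : ι → ℝ} (hρ : ∀ i, |ρ i| ≤ 1) (f : (ι → Bool) → X) :
    ∑ ε, ‖noiseOp ρ f ε‖ ≤ ∑ ε, ‖f ε‖ := by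
  simpa only [max_eq_left (hρ _), Finset.prod_const_one, one_mul] using sum_norm_noiseOp_le ρ f

lemma sum_norm_le_inv_pow_mul_sum_norm_noiseOp {r : ℝ} (hr₀ : 0 < r) (hr₁ : r ≤ 1)
    (f : (ι → Bool) → X) :
    ∑ ε, ‖f ε‖ ≤ r⁻¹ ^ Fintype.card ι * ∑ ε, ‖noiseOp (fun _ => r) f ε‖ := by
  have inv_mul : (fun _ : ι => r⁻¹) * (fun _ => r) = 1 := funext fun _ => inv_mul_cancel₀ hr₀.ne'
  have max_abs_inv : max 1 |r⁻¹| = r⁻¹ := by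
    rw [abs_of_pos (inv_pos.2 hr₀), max_eq_right (one_le_inv₀ hr₀ |>.2 hr₁)]
  simpa only [noiseOp_noiseOp, inv_mul, noiseOp_one, max_abs_inv, Finset.prod_const,
    Finset.card_univ] using sum_norm_noiseOp_le (fun _ => r⁻¹) (noiseOp (fun _ => r) f)

/-! ### Pisier's inequality with a logarithmic factor -/

/-- The Rademacher average `𝔼_d ‖∑ i, d i • x i‖` over uniformly random signs `d`. -/
noncomputable def rademacherAvg (x : ι → X) : ℝ :=
  ((2 : ℝ) ^ Fintype.card ι)⁻¹ * ∑ d : ι → Bool, ‖∑ i, rsign (d i) • x i‖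

/-- The `L¹` size of the discrete gradient of `f`, with the Rademacher average as the norm of the
gradient at a point. The outer sum is not normalized. -/
noncomputable def rademacherGradient (f : (ι → Bool) → X) : ℝ :=
  ∑ ε, rademacherAvg fun i => coordDiff i f ε

lemma rademacherGradient_nonneg (f : (ι → Bool) → X) : 0 ≤ rademacherGradient f := by
  unfold rademacherGradient rademacherAvg
  positivity

lemma rademacherGradient_eq_avg_sum_norm (f : (ι → Bool) → X) :
    rademacherGradient f =
      (2 ^ Fintype.card ι)⁻¹ * ∑ d : ι → Bool, ∑ ε, ‖(∑ i, rsign (d i) • coordDiff i f) ε‖ := by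
  simp only [rademacherGradient, rademacherAvg, ← Finset.mul_sum, Finset.sum_apply, Pi.smul_apply]
  rw [Finset.sum_comm]

lemma sum_norm_sum_noiseOpPartial_le {r : ℝ} (hr₀ : 0 ≤ r) (hr₁ : r < 1) (f : (ι → Bool) → X) :
    ∑ ε, ‖(∑ i, noiseOpPartial (fun _ => r) i f) ε‖ ≤
      (1 - r)⁻¹ * (rademacherGradient f / 2) := by
  have one_sub_pos : 0 < 1 - r := sub_pos.2 hr₁
  have abs_param_le (d : ι → Bool) (j : ι) : |r + (1 - r) * rsign (d j)| ≤ 1 := by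
    calc |r + (1 - r) * rsign (d j)| ≤ |r| + |(1 - r) * rsign (d j)| := abs_add_le _ _
      _ = 1 := by rw [abs_mul, abs_rsign, abs_of_nonneg hr₀, abs_of_pos one_sub_pos]; ring
  have scaled : 2 ^ Fintype.card ι * (1 - r) * 2 *
        ∑ ε, ‖(∑ i, noiseOpPartial (fun _ => r) i f) ε‖ ≤
      ∑ d : ι → Bool, ∑ ε, ‖(∑ i, rsign (d i) • coordDiff i f) ε‖ := by
    calc _ = ∑ ε, ‖(∑ d : ι → Bool, noiseOp (fun j => r + (1 - r) * rsign (d j))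
              (∑ i, rsign (d i) • coordDiff i f)) ε‖ := by
          simp only [sum_noiseOp_sum_rsign_smul_coordDiff, Pi.smul_apply, norm_smul,
            ← Finset.mul_sum]
          rw [Real.norm_of_nonneg (by positivity)]
      _ ≤ ∑ ε, ∑ d : ι → Bool, ‖noiseOp (fun j => r + (1 - r) * rsign (d j))
              (∑ i, rsign (d i) • coordDiff i f) ε‖ := by
          gcongr with ε
          rw [Finset.sum_apply]
          exact norm_sum_le _ _
      _ ≤ _ := by
          rw [Finset.sum_comm]
          exact Finset.sum_le_sum fun d _ => sum_norm_noiseOp_le_sum_norm (abs_param_le d) _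
  rw [rademacherGradient_eq_avg_sum_norm, inv_mul_eq_div, inv_mul_eq_div, div_div, div_div,
    le_div_iff₀ (by positivity)]
  linarith

lemma sum_norm_noiseOp_sub_noiseOp_zero_le {r : ℝ} (hr₀ : 0 ≤ r) (hr₁ : r < 1)
    (f : (ι → Bool) → X) :
    ∑ ε, ‖noiseOp (fun _ => r) f ε - noiseOp 0 f ε‖ ≤
      -Real.log (1 - r) * (rademacherGradient f / 2) := by
  have hB (t : ℝ) (ht : t ∈ Set.Icc 0 r) :
      HasDerivAt (fun s => -Real.log (1 - s) * (rademacherGradient f / 2))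
        ((1 - t)⁻¹ * (rademacherGradient f / 2)) t := by
    have one_sub_ne : 1 - t ≠ 0 := (sub_pos.2 (ht.2.trans_lt hr₁)).ne'
    simpa only [id, neg_div, neg_neg, one_div] using
      (((hasDerivAt_id t).const_sub 1).log one_sub_ne).fun_neg.mul_const (rademacherGradient f / 2)
  have mean_value := sum_norm_image_sub_le_of_sum_norm_deriv_le hr₀
    (fun t _ => hasDerivAt_noiseOp_diag f t) hB
    (fun t ht => sum_norm_sum_noiseOpPartial_le ht.1 (ht.2.trans_lt hr₁) f)
  simpa [Pi.zero_def] using mean_value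

lemma sum_norm_sub_noiseOp_zero_le {r : ℝ} (hr₀ : 0 < r) (hr₁ : r < 1) (f : (ι → Bool) → X) :
    ∑ ε, ‖f ε - noiseOp 0 f ε‖ ≤
      r⁻¹ ^ Fintype.card ι * (-Real.log (1 - r) * (rademacherGradient f / 2)) := by
  have noiseOp_sub_mean :
      noiseOp (fun _ => r) (f - noiseOp 0 f) = noiseOp (fun _ => r) f - noiseOp 0 f := by
    rw [map_sub, noiseOp_noiseOp, mul_zero]
  calc ∑ ε, ‖f ε - noiseOp 0 f ε‖
      ≤ r⁻¹ ^ Fintype.card ι * ∑ ε, ‖noiseOp (fun _ => r) f ε - noiseOp 0 f ε‖ := by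
        simpa only [noiseOp_sub_mean, Pi.sub_apply] using
          sum_norm_le_inv_pow_mul_sum_norm_noiseOp hr₀ hr₁.le (f - noiseOp 0 f)
    _ ≤ _ := by
        gcongr
        exact sum_norm_noiseOp_sub_noiseOp_zero_le hr₀.le hr₁ f

theorem sum_norm_sub_antipode_le (hι : 2 ≤ Fintype.card ι) (f : (ι → Bool) → X) :
    ∑ ε, ‖f ε - f (fun i => !ε i)‖ ≤
      Real.exp 2 * Real.log (Fintype.card ι) * rademacherGradient f := by
  set n := Fintype.card ι
  have one_lt : (1 : ℝ) < n := by exact_mod_cast hι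
  have gradient_nonneg := rademacherGradient_nonneg f
  let antipode : Equiv.Perm (ι → Bool) := Equiv.piCongrRight fun _ => Equiv.boolNot
  calc ∑ ε, ‖f ε - f (fun i => !ε i)‖
      ≤ 2 * ∑ ε, ‖f ε - noiseOp 0 f ε‖ := by
        simp only [noiseOp_zero_apply_eq f _ fun _ => true]
        exact sum_norm_sub_comp_perm_le antipode f _
    _ ≤ 2 * ((1 - (n : ℝ)⁻¹)⁻¹ ^ n * (Real.log n * (rademacherGradient f / 2))) := by
        gcongr
        simpa only [sub_sub_cancel, Real.log_inv, neg_neg] using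
          sum_norm_sub_noiseOp_zero_le (sub_pos.2 (inv_lt_one_of_one_lt₀ one_lt))
            (sub_lt_self 1 (inv_pos.2 (one_pos.trans one_lt))) f
    _ ≤ 2 * (Real.exp 2 * (Real.log n * (rademacherGradient f / 2))) := by
        gcongr
        exact inv_one_sub_inv_pow_le_exp_two hι
    _ = Real.exp 2 * Real.log n * rademacherGradient f := by ring

/-! ### Rademacher type -/

/-- The space `X` has Rademacher type `p` with constant `T`. Sign vectors are encoded as Boolean
vectors through `rsign`. -/
def HasRademacherType (X : Type*) [NormedAddCommGroup X] [NormedSpace ℝ X] (p T : ℝ) : Prop :=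
  ∀ (n : ℕ) (x : Fin n → X),
    ((2 : ℝ) ^ n)⁻¹ * ∑ ε : Fin n → Bool, ‖∑ i : Fin n, rsign (ε i) • x i‖ ≤
      T * (∑ i : Fin n, ‖x i‖ ^ p) ^ (1 / p)

namespace HasRademacherType

variable {p T : ℝ}

lemma rademacherAvg_le (hX : HasRademacherType X p T) (x : ι → X) :
    rademacherAvg x ≤ T * (∑ i, ‖x i‖ ^ p) ^ (1 / p) := by
  let e := Fintype.equivFin ι
  have reindex_sum (d : ι → Bool) :
      ∑ k, rsign (d (e.symm k)) • x (e.symm k) = ∑ i, rsign (d i) • x i :=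
    e.symm.sum_comp fun i => rsign (d i) • x i
  have reindex_avg : ∑ d : Fin (Fintype.card ι) → Bool, ‖∑ k, rsign (d k) • x (e.symm k)‖ =
      ∑ d : ι → Bool, ‖∑ i, rsign (d i) • x i‖ := by
    rw [← (e.arrowCongr (Equiv.refl Bool)).sum_comp]
    exact Finset.sum_congr rfl fun d _ => congrArg _ (reindex_sum d)
  have type_ineq := hX (Fintype.card ι) (x ∘ e.symm)
  simp only [Function.comp_apply] at type_ineq
  rwa [reindex_avg, e.symm.sum_comp fun i => ‖x i‖ ^ p] at type_ineq

lemma nonneg [Nontrivial X] (hX : HasRademacherType X p T) : 0 ≤ T := by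
  obtain ⟨x, hx⟩ := exists_ne (0 : X)
  have type_ineq := hX 1 fun _ => x
  have rpow_pos : 0 < (∑ _i : Fin 1, ‖x‖ ^ p) ^ (1 / p) := by
    have := norm_pos_iff.2 hx
    simp only [Fin.sum_univ_one]
    positivity
  exact nonneg_of_mul_nonneg_left (le_trans (by positivity) type_ineq) rpow_pos

lemma avg_rademacherGradient_le (hX : HasRademacherType X p T) (hT : 0 ≤ T) (hp : 1 ≤ p)
    (f : (ι → Bool) → X) :
    ((2 : ℝ) ^ Fintype.card ι)⁻¹ * rademacherGradient f ≤
      T * (∑ i, ((2 : ℝ) ^ Fintype.card ι)⁻¹ * ∑ ε, ‖coordDiff i f ε‖ ^ p) ^ (1 / p) := by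
  have jensen : ∑ ε, ((2 : ℝ) ^ Fintype.card ι)⁻¹ * (∑ i, ‖coordDiff i f ε‖ ^ p) ^ (1 / p) ≤
      (∑ ε, ((2 : ℝ) ^ Fintype.card ι)⁻¹ * ∑ i, ‖coordDiff i f ε‖ ^ p) ^ (1 / p) :=
    (Real.concaveOn_rpow (by positivity) (div_le_one_of_le₀ hp (by positivity))).le_map_sum
      (fun _ _ => by positivity) (by simp) fun ε _ =>
        Set.mem_Ici.2 (Finset.sum_nonneg fun i _ => by positivity)
  calc ((2 : ℝ) ^ Fintype.card ι)⁻¹ * rademacherGradient f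
      ≤ ((2 : ℝ) ^ Fintype.card ι)⁻¹ * ∑ ε, T * (∑ i, ‖coordDiff i f ε‖ ^ p) ^ (1 / p) := by
        unfold rademacherGradient
        gcongr with ε
        exact hX.rademacherAvg_le _
    _ = T * ∑ ε, ((2 : ℝ) ^ Fintype.card ι)⁻¹ * (∑ i, ‖coordDiff i f ε‖ ^ p) ^ (1 / p) := by
        rw [← Finset.mul_sum, ← Finset.mul_sum, mul_left_comm]
    _ ≤ T * (∑ ε, ((2 : ℝ) ^ Fintype.card ι)⁻¹ * ∑ i, ‖coordDiff i f ε‖ ^ p) ^ (1 / p) := by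
        gcongr
    _ = _ := by
        rw [← Finset.mul_sum, Finset.sum_comm, Finset.mul_sum]

end HasRademacherType

theorem metric_type_up_to_log_general {p T : ℝ} (hp : 1 ≤ p) (hX : HasRademacherType X p T)
    (hι : 2 ≤ Fintype.card ι) (f : (ι → Bool) → X) :
    ((2 : ℝ) ^ Fintype.card ι)⁻¹ * ∑ ε, ‖f ε - f (fun i => !ε i)‖ ≤
      Real.exp 2 * T * Real.log (Fintype.card ι) *
        (∑ i, ((2 : ℝ) ^ Fintype.card ι)⁻¹ *
          ∑ ε, ‖f ε - f (Function.update ε i (!ε i))‖ ^ p) ^ (1 / p) := by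
  cases subsingleton_or_nontrivial X with
  | inl _ =>
    have p_ne_zero : p ≠ 0 := (one_pos.trans_le hp).ne'
    simp [Subsingleton.elim _ (0 : X), p_ne_zero]
  | inr _ =>
    calc ((2 : ℝ) ^ Fintype.card ι)⁻¹ * ∑ ε, ‖f ε - f (fun i => !ε i)‖
        ≤ ((2 : ℝ) ^ Fintype.card ι)⁻¹ *
            (Real.exp 2 * Real.log (Fintype.card ι) * rademacherGradient f) := by
          gcongr
          exact sum_norm_sub_antipode_le hι f
      _ = Real.exp 2 * Real.log (Fintype.card ι) *
            (((2 : ℝ) ^ Fintype.card ι)⁻¹ * rademacherGradient f) := by ring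
      _ ≤ Real.exp 2 * Real.log (Fintype.card ι) *
            (T * (∑ i, ((2 : ℝ) ^ Fintype.card ι)⁻¹ * ∑ ε, ‖coordDiff i f ε‖ ^ p) ^ (1 / p)) := by
          exact mul_le_mul_of_nonneg_left (hX.avg_rademacherGradient_le hX.nonneg hp f)
            (by positivity)
      _ = _ := by
          simp only [coordDiff]
          ring

end Cube

/-- There is a universal constant `c > 0` such that if a Banach space `X` has Rademacher type
`p ∈ (1,2]` with constant `T`, then for every integer `n ≥ 2` and every `f : {-1,1}ⁿ → X`,
`𝔼_ε ‖f(ε) - f(-ε)‖ ≤ c T (log n) (∑ᵢ 𝔼_ε ‖f(ε) - f(ε₁,…,-εᵢ,…,ε_n)‖^p)^{1/p}`. -/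
theorem metric_type_up_to_log :
    ∃ c : ℝ, 0 < c ∧
      ∀ (X : Type u) [NormedAddCommGroup X] [NormedSpace ℝ X] [CompleteSpace X],
        ∀ p T : ℝ, 1 < p → p ≤ 2 →
          (∀ (n : ℕ) (x : Fin n → X),
            ((2 : ℝ) ^ n)⁻¹ * ∑ ε : Fin n → Bool, ‖∑ i : Fin n, rsign (ε i) • x i‖ ≤
              T * (∑ i : Fin n, ‖x i‖ ^ p) ^ (1 / p)) →
          ∀ n : ℕ, 2 ≤ n → ∀ f : (Fin n → Bool) → X,
            ((2 : ℝ) ^ n)⁻¹ * ∑ ε : Fin n → Bool, ‖f ε - f (fun i => !ε i)‖ ≤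
              c * T * Real.log (n : ℝ) *
                (∑ i : Fin n, ((2 : ℝ) ^ n)⁻¹ * ∑ ε : Fin n → Bool,
                  ‖f ε - f (Function.update ε i (!ε i))‖ ^ p) ^ (1 / p) := by
  refine ⟨Real.exp 2, Real.exp_pos 2, fun X _ _ _ p T hp _ hX n hn f => ?_⟩
  simpa only [Fintype.card_fin] using
    metric_type_up_to_log_general hp.le hX (by rwa [Fintype.card_fin]) f
end

section
/- Let (X,‖·‖_X) be a Banach space and q ∈ [2,∞). Then X has Rademacher cotype q if and only if X has metric cotype q. -/
open scoped BigOperators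

/-- A Banach space `X` has Rademacher cotype `q` if there is `C > 0` such that for every `n` and
every `x₁,…,xₙ ∈ X`, `(∑ᵢ ‖xᵢ‖^q)^{1/q} ≤ C 𝔼_ε ‖∑ᵢ εᵢ xᵢ‖`. -/
def RademacherCotype (X : Type*) [NormedAddCommGroup X] [NormedSpace ℝ X] (q : ℝ) : Prop :=
  ∃ C : ℝ, 0 < C ∧ ∀ (n : ℕ) (x : Fin n → X),
    (∑ i : Fin n, ‖x i‖ ^ q) ^ (1 / q) ≤
      C * (((2 : ℝ) ^ n)⁻¹ *
        ∑ ε : Fin n → Bool, ‖∑ i : Fin n, (if ε i then (1 : ℝ) else -1) • x i‖)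

/-- A Banach space `X` has metric cotype `q` if there is `C > 0` such that for every `n ≥ 1`
there exists an even integer `m` such that every `f : ℤ_mⁿ → X` satisfies
`∑ⱼ ∑_x ‖f(x + (m/2)eⱼ) - f(x)‖^q ≤ (Cm)^q 3^{-n} ∑_{ε ∈ {-1,0,1}ⁿ} ∑_x ‖f(x+ε) - f(x)‖^q`. -/
def MetricCotype (X : Type*) [NormedAddCommGroup X] (q : ℝ) : Prop :=
  ∃ C : ℝ, 0 < C ∧ ∀ n : ℕ, 0 < n → ∃ m : ℕ, ∃ hm : m ≠ 0, Even m ∧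
    haveI : NeZero m := ⟨hm⟩
    ∀ f : (Fin n → ZMod m) → X,
      (∑ j : Fin n, ∑ x : Fin n → ZMod m,
          ‖f (x + fun i => if i = j then ((m / 2 : ℕ) : ZMod m) else 0) - f x‖ ^ q) ≤
        (C * m) ^ q / 3 ^ n *
          ∑ ε : Fin n → ({-1, 0, 1} : Finset ℤ), ∑ x : Fin n → ZMod m,
            ‖f (x + fun i => ((ε i : ℤ) : ZMod m)) - f x‖ ^ q

/-!
From metric to Rademacher cotype, test the metric inequality on `y ↦ ∑ⱼ φ(yⱼ) xⱼ`, where `φ` is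
the real or imaginary part of the standard character of `ℤ_m`. A shift by `m / 2` negates `φ`, so
the left side is `∑ⱼ ‖xⱼ‖^q` up to constants, while steps in `{-1, 0, 1}` change `φ` by at most
`2π / m`, so by the contraction principle the right side is a `q`-th moment of `∑ⱼ εⱼ xⱼ`;
Kahane's inequality replaces it by the first moment.

Conversely, view `f` as a vector in `ℓ_q(ℤ_mⁿ; X)`, which inherits the cotype of `X`. Averaging
`f` over long orbit segments in every direction `a ∈ {-1, 0, 1}ⁿ` gives a `g` for which
`g(x + a) - g(x)` is almost additive in `a`, so the cotype inequality for the `g(· + eⱼ) - g`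
controls their norms by the mean displacement of `f`. Telescoping along `m / 2` steps gives the
metric inequality for `g`, and if `m` is large compared to the length of the orbit segments then
replacing `f` by `g` costs little.
-/

section PowerMean

variable {ι : Type*}

lemma rpow_expect_le [Fintype ι] [Nonempty ι] {f : ι → ℝ} (hf : ∀ i, 0 ≤ f i) {p : ℝ}
    (hp : 1 ≤ p) : (𝔼 i, f i) ^ p ≤ 𝔼 i, f i ^ p := by
  have h := Real.rpow_arith_mean_le_arith_mean_rpow Finset.univ
    (fun _ : ι => (Fintype.card ι : ℝ)⁻¹) f (fun _ _ => by positivity) (by simp)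
    (fun i _ => hf i) hp
  simpa only [← Finset.mul_sum, Fintype.expect_eq_sum_div_card, div_eq_inv_mul] using h

lemma expect_rpow_le_of_expect_rpow_le [Fintype ι] [Nonempty ι] {f : ι → ℝ} (hf : ∀ i, 0 ≤ f i)
    {p r M : ℝ} (hp : 0 < p) (hpr : p ≤ r) (hM : 0 ≤ M) (h : 𝔼 i, f i ^ r ≤ M ^ r) :
    𝔼 i, f i ^ p ≤ M ^ p := by
  have hrp : 1 ≤ r / p := (one_le_div hp).2 hpr
  have rpow_rpow_div : ∀ a : ℝ, 0 ≤ a → (a ^ p) ^ (r / p) = a ^ r := fun a ha => by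
    rw [← Real.rpow_mul ha, mul_div_cancel₀ r hp.ne']
  have nonneg : 0 ≤ 𝔼 i, f i ^ p := Finset.expect_nonneg fun i _ => Real.rpow_nonneg (hf i) p
  rw [← Real.rpow_le_rpow_iff nonneg (by positivity) (show 0 < r / p by linarith),
    rpow_rpow_div M hM]
  calc (𝔼 i, f i ^ p) ^ (r / p) ≤ 𝔼 i, (f i ^ p) ^ (r / p) :=
        rpow_expect_le (fun i => Real.rpow_nonneg (hf i) p) hrp
    _ = 𝔼 i, f i ^ r := Finset.expect_congr rfl fun i _ => rpow_rpow_div _ (hf i)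
    _ ≤ M ^ r := h

lemma sum_add_rpow_le (s : Finset ι) {f g : ι → ℝ} (hf : ∀ i ∈ s, 0 ≤ f i)
    (hg : ∀ i ∈ s, 0 ≤ g i) {p c α β : ℝ} (hp : 1 ≤ p) (hc : 0 ≤ c) (hα : 0 ≤ α) (hβ : 0 ≤ β)
    (hfα : ∑ i ∈ s, f i ^ p ≤ c * α ^ p) (hgβ : ∑ i ∈ s, g i ^ p ≤ c * β ^ p) :
    ∑ i ∈ s, (f i + g i) ^ p ≤ c * (α + β) ^ p := by
  have hp0 : 0 < p := by linarith
  have root_mul : ∀ γ : ℝ, 0 ≤ γ → (c * γ ^ p) ^ (1 / p) = c ^ (1 / p) * γ := fun γ hγ => by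
    rw [Real.mul_rpow hc (by positivity), one_div, Real.rpow_rpow_inv hγ hp0.ne']
  have sum_nonneg : ∀ u : ι → ℝ, (∀ i ∈ s, 0 ≤ u i) → 0 ≤ ∑ i ∈ s, u i ^ p := fun u hu =>
    Finset.sum_nonneg fun i hi => Real.rpow_nonneg (hu i hi) _
  refine (Real.rpow_le_rpow_iff
    (sum_nonneg (fun i => f i + g i) fun i hi => add_nonneg (hf i hi) (hg i hi))
    (by positivity) (one_div_pos.2 hp0)).1 ?_
  calc (∑ i ∈ s, (f i + g i) ^ p) ^ (1 / p)
      ≤ (∑ i ∈ s, f i ^ p) ^ (1 / p) + (∑ i ∈ s, g i ^ p) ^ (1 / p) :=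
        Real.Lp_add_le_of_nonneg s hp hf hg
    _ ≤ (c * α ^ p) ^ (1 / p) + (c * β ^ p) ^ (1 / p) := by
        have := sum_nonneg f hf
        have := sum_nonneg g hg
        gcongr
    _ = (c * (α + β) ^ p) ^ (1 / p) := by
        rw [root_mul α hα, root_mul β hβ, root_mul (α + β) (by positivity), mul_add]

lemma sum_const_rpow_le (s : Finset ι) {c q : ℝ} (hc : 0 ≤ c) (hq : 1 ≤ q) :
    ∑ _i ∈ s, c ^ q ≤ (s.card * c) ^ q := by
  rw [Finset.sum_const, nsmul_eq_mul, Real.mul_rpow (Nat.cast_nonneg _) hc]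
  rcases s.eq_empty_or_nonempty with rfl | hs
  · simp [Real.zero_rpow (by linarith : q ≠ 0)]
  · have hcard : (1 : ℝ) ≤ s.card := Nat.one_le_cast.2 hs.card_pos
    exact mul_le_mul_of_nonneg_right (Real.self_le_rpow_of_one_le hcard hq) (by positivity)

lemma expect_add_rpow_le [Fintype ι] {f g : ι → ℝ} (hf : ∀ i, 0 ≤ f i) (hg : ∀ i, 0 ≤ g i)
    {p α β : ℝ} (hp : 1 ≤ p) (hα : 0 ≤ α) (hβ : 0 ≤ β) (hfα : 𝔼 i, f i ^ p ≤ α ^ p)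
    (hgβ : 𝔼 i, g i ^ p ≤ β ^ p) : 𝔼 i, (f i + g i) ^ p ≤ (α + β) ^ p := by
  cases isEmpty_or_nonempty ι
  · simpa using Real.rpow_nonneg (add_nonneg hα hβ) p
  have hcard : (0 : ℝ) < Fintype.card ι := by positivity
  rw [Fintype.expect_eq_sum_div_card, div_le_iff₀' hcard] at hfα hgβ ⊢
  exact sum_add_rpow_le _ (fun i _ => hf i) (fun i _ => hg i) hp hcard.le hα hβ hfα hgβ

lemma expect_sq_pow_three_le [Fintype ι] {f : ι → ℝ} (hf : ∀ i, 0 ≤ f i) :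
    (𝔼 i, f i ^ 2) ^ 3 ≤ (𝔼 i, f i) ^ 2 * 𝔼 i, f i ^ 4 := by
  have nonneg : ∀ k : ℕ, 0 ≤ 𝔼 i, f i ^ k := fun k =>
    Finset.expect_nonneg fun i _ => pow_nonneg (hf i) k
  have cauchy_one_three : (𝔼 i, f i ^ 2) ^ 2 ≤ (𝔼 i, f i) * 𝔼 i, f i ^ 3 := by
    have h := Finset.expect_mul_sq_le_sq_mul_sq Finset.univ (fun i => √(f i))
      (fun i => √(f i) * f i)
    have hsq : ∀ i, √(f i) ^ 2 = f i := fun i => Real.sq_sqrt (hf i)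
    simpa only [← mul_assoc, ← sq, mul_pow, hsq, ← pow_succ'] using h
  have cauchy_two_four : (𝔼 i, f i ^ 3) ^ 2 ≤ (𝔼 i, f i ^ 2) * 𝔼 i, f i ^ 4 := by
    have h := Finset.expect_mul_sq_le_sq_mul_sq Finset.univ f (fun i => f i ^ 2)
    simpa only [← pow_succ', ← pow_mul] using h
  rcases (nonneg 2).eq_or_lt with h0 | hpos
  · rw [← h0, zero_pow three_ne_zero]
    exact mul_nonneg (sq_nonneg _) (nonneg 4)
  refine le_of_mul_le_mul_right ?_ hpos
  calc (𝔼 i, f i ^ 2) ^ 3 * 𝔼 i, f i ^ 2 = ((𝔼 i, f i ^ 2) ^ 2) ^ 2 := by ring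
    _ ≤ ((𝔼 i, f i) * 𝔼 i, f i ^ 3) ^ 2 := by gcongr
    _ = (𝔼 i, f i) ^ 2 * (𝔼 i, f i ^ 3) ^ 2 := mul_pow _ _ 2
    _ ≤ (𝔼 i, f i) ^ 2 * ((𝔼 i, f i ^ 2) * 𝔼 i, f i ^ 4) := by gcongr
    _ = (𝔼 i, f i) ^ 2 * (𝔼 i, f i ^ 4) * 𝔼 i, f i ^ 2 := by ring

end PowerMean

lemma expect_fin_succ_fun {α : Type*} [Fintype α] {n : ℕ} (F : (Fin (n + 1) → α) → ℝ) :
    𝔼 ω, F ω = 𝔼 a, 𝔼 ω : Fin n → α, F (Fin.cons a ω) := by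
  rw [← Finset.expect_product', Finset.univ_product_univ]
  exact (Fintype.expect_equiv (Fin.consEquiv fun _ => α) _ _ fun _ => rfl).symm

section ConvexOrder

variable {X : Type*} [AddCommGroup X] [Module ℝ X] {α β : Type*} [Fintype α] [Fintype β]

/-- The convex order between the laws of two vector-valued functions on finite types, both
carrying the uniform probability measure. -/
def ConvexDominated (v : α → X) (w : β → X) : Prop :=
  ∀ h : X → ℝ, ConvexOn ℝ Set.univ h → 𝔼 a, h (v a) ≤ 𝔼 b, h (w b)

lemma ConvexDominated.sum_apply {n : ℕ} {v : Fin n → α → X} {w : Fin n → β → X}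
    (hvw : ∀ i, ConvexDominated (v i) (w i)) :
    ConvexDominated (fun ω : Fin n → α => ∑ i, v i (ω i))
      (fun ω : Fin n → β => ∑ i, w i (ω i)) := by
  induction n with
  | zero => intro h _; simp
  | succ n ih =>
    intro h hh
    have translate : ∀ z : X, ConvexOn ℝ Set.univ fun y => h (z + y) := fun z => by
      simpa using! hh.translate_right z
    simp only [expect_fin_succ_fun, Fin.sum_univ_succ, Fin.cons_zero, Fin.cons_succ]
    calc 𝔼 a, 𝔼 ω : Fin n → α, h (v 0 a + ∑ i, v i.succ (ω i))
        ≤ 𝔼 a, 𝔼 ω : Fin n → β, h (v 0 a + ∑ i, w i.succ (ω i)) :=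
          Finset.expect_le_expect fun a _ => ih (fun i => hvw i.succ) _ (translate _)
      _ = 𝔼 ω : Fin n → β, 𝔼 a, h (∑ i, w i.succ (ω i) + v 0 a) := by
          rw [Finset.expect_comm]
          simp only [add_comm]
      _ ≤ 𝔼 ω : Fin n → β, 𝔼 b, h (∑ i, w i.succ (ω i) + w 0 b) :=
          Finset.expect_le_expect fun ω _ => hvw 0 _ (translate _)
      _ = 𝔼 b, 𝔼 ω : Fin n → β, h (w 0 b + ∑ i, w i.succ (ω i)) := by
          rw [Finset.expect_comm]
          simp only [add_comm]

end ConvexOrder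

lemma convexOn_norm_rpow {X : Type*} [SeminormedAddCommGroup X] [NormedSpace ℝ X] {q : ℝ}
    (hq : 1 ≤ q) : ConvexOn ℝ Set.univ fun y : X => ‖y‖ ^ q := by
  refine ⟨convex_univ, fun u _ v _ a b ha hb hab => ?_⟩
  calc ‖a • u + b • v‖ ^ q ≤ (a * ‖u‖ + b * ‖v‖) ^ q := by
        gcongr
        exact convexOn_univ_norm.2 trivial trivial ha hb hab
    _ ≤ a * ‖u‖ ^ q + b * ‖v‖ ^ q :=
        (convexOn_rpow hq).2 (norm_nonneg u) (norm_nonneg v) ha hb hab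

section SignSums

variable {X : Type*} {n : ℕ}

/-- The set of coefficients `{-1, 0, 1}` of the edges in the metric cotype inequality, as a type. -/
abbrev Ternary : Type := ({-1, 0, 1} : Finset ℤ)

instance : Inhabited Ternary := ⟨⟨0, by decide⟩⟩

lemma Ternary.abs_le_one (t : Ternary) : |(t : ℤ)| ≤ 1 := by
  have ht := t.2
  simp only [Finset.mem_insert, Finset.mem_singleton] at ht
  rw [Int.abs_le_one_iff]
  tauto

lemma expect_ternary (F : ℤ → ℝ) : 𝔼 t : Ternary, F t = (F (-1) + F 0 + F 1) / 3 := by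
  rw [Fintype.expect_eq_sum_div_card, Finset.sum_coe_sort, Fintype.card_coe]
  simp [add_assoc]

lemma expect_bool (F : Bool → ℝ) : 𝔼 b, F b = (F true + F false) / 2 := by
  rw [Fintype.expect_eq_sum_div_card, Fintype.sum_bool, Fintype.card_bool, Nat.cast_two]

section Module

variable [AddCommGroup X] [Module ℝ X]

/-- The Rademacher sum `∑ᵢ εᵢ xᵢ`, where `true` encodes the sign `1` and `false` the sign `-1`. -/
def signedSum (x : Fin n → X) (ε : Fin n → Bool) : X := ∑ i, (if ε i then (1 : ℝ) else -1) • x i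

/-- The lazy Rademacher sum `∑ᵢ εᵢ xᵢ` with coefficients in `{-1, 0, 1}`. -/
def ternarySum (x : Fin n → X) (ε : Fin n → Ternary) : X := ∑ i, ((ε i : ℤ) : ℝ) • x i

lemma signedSum_smul (c : ℝ) (x : Fin n → X) (ε : Fin n → Bool) :
    signedSum (fun i => c • x i) ε = c • signedSum x ε := by
  simp only [signedSum, Finset.smul_sum, smul_comm c]

lemma ternarySum_smul (c : ℝ) (x : Fin n → X) (ε : Fin n → Ternary) :
    ternarySum (fun i => c • x i) ε = c • ternarySum x ε := by
  simp only [ternarySum, Finset.smul_sum, smul_comm c]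

lemma convexDominated_sign_ternary (x : X) :
    ConvexDominated (fun b : Bool => (if b then (1 : ℝ) else -1) • x)
      (fun t : Ternary => ((t : ℤ) : ℝ) • (3 / 2 : ℝ) • x) := by
  intro h hh
  have le_interpolation : ∀ y : X, h y ≤ 2 / 3 * h ((3 / 2 : ℝ) • y) + 1 / 3 * h 0 := fun y => by
    have := hh.2 (Set.mem_univ ((3 / 2 : ℝ) • y)) (Set.mem_univ 0)
      (show (0 : ℝ) ≤ 2 / 3 by norm_num) (show (0 : ℝ) ≤ 1 / 3 by norm_num) (by norm_num)
    simpa [smul_smul] using this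
  rw [expect_bool, expect_ternary fun t => h ((t : ℝ) • (3 / 2 : ℝ) • x)]
  have hpos := le_interpolation x
  have hneg := le_interpolation (-x)
  simp only [smul_neg] at hneg
  simp only [if_true, Bool.false_eq_true, if_false, one_smul, neg_smul, Int.cast_neg, Int.cast_one,
    Int.cast_zero, zero_smul]
  linarith

lemma convexOn_add_neg_smul_le {h : X → ℝ} (hh : ConvexOn ℝ Set.univ h) {s L : ℝ} (hs : |s| ≤ L)
    (x : X) : h (s • x) + h (-(s • x)) ≤ h (L • x) + h (-(L • x)) := by
  obtain ⟨a, b, ha, hb, hab, rfl⟩ : s ∈ segment ℝ (-L) L := by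
    rw [segment_eq_Icc (by linarith [abs_nonneg s])]
    exact abs_le.1 hs
  have hpos := hh.2 (Set.mem_univ (-(L • x))) (Set.mem_univ (L • x)) ha hb hab
  have hneg := hh.2 (Set.mem_univ (L • x)) (Set.mem_univ (-(L • x))) ha hb hab
  rw [show a • -(L • x) + b • L • x = (a • -L + b • L) • x by module] at hpos
  rw [show a • L • x + b • -(L • x) = -((a • -L + b • L) • x) by module] at hneg
  simp only [smul_eq_mul] at hpos hneg ⊢
  linear_combination hpos + hneg + hab * (h (L • x) + h (-(L • x)))

-- Antiperiodicity makes the law of `ψ • x` symmetric; the rest is the contraction principle.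
lemma convexDominated_sign_of_antiperiodic {A : Type*} [AddGroup A] [Fintype A] {ψ : A → ℝ} {c : A}
    {L : ℝ} (hψ : Function.Antiperiodic ψ c) (hL : ∀ z, |ψ z| ≤ L) (x : X) :
    ConvexDominated (fun z => ψ z • x) (fun b : Bool => (if b then (1 : ℝ) else -1) • L • x) := by
  intro h hh
  have symmetric : 𝔼 z, h (ψ z • x) = 𝔼 z, h (-(ψ z • x)) :=
    (Fintype.expect_equiv (Equiv.addRight c) _ _ fun z => by simp [hψ z]).symm
  calc 𝔼 z, h (ψ z • x) = 𝔼 z, (h (ψ z • x) + h (-(ψ z • x))) / 2 := by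
        rw [← Finset.expect_div, Finset.expect_add_distrib, ← symmetric, add_self_div_two]
    _ ≤ 𝔼 _z : A, (h (L • x) + h (-(L • x))) / 2 :=
        Finset.expect_le_expect fun z _ => by
          linarith [convexOn_add_neg_smul_le hh (hL z) x]
    _ = 𝔼 b : Bool, h ((if b then (1 : ℝ) else -1) • L • x) := by
        rw [Fintype.expect_const, expect_bool]
        simp

end Module

variable [NormedAddCommGroup X] [NormedSpace ℝ X]

lemma expect_norm_signedSum_le_ternarySum (x : Fin n → X) :
    𝔼 ε, ‖signedSum x ε‖ ≤ 3 / 2 * 𝔼 ε, ‖ternarySum x ε‖ := by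
  have h := ConvexDominated.sum_apply (fun i => convexDominated_sign_ternary (x i)) _
    convexOn_univ_norm
  refine h.trans_eq ?_
  rw [Finset.mul_expect]
  refine Finset.expect_congr rfl fun ε _ => ?_
  rw [← norm_smul_of_nonneg (by norm_num), ← ternarySum_smul, ternarySum]

lemma expect_norm_rpow_sum_le_of_antiperiodic {A : Type*} [AddGroup A] [Fintype A] {q : ℝ}
    (hq : 1 ≤ q) {ψ : Fin n → A → ℝ} {c : A} {L : ℝ} (hψ : ∀ j, Function.Antiperiodic (ψ j) c)
    (hL : ∀ j z, |ψ j z| ≤ L) (hL0 : 0 ≤ L) (x : Fin n → X) :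
    𝔼 y : Fin n → A, ‖∑ j, ψ j (y j) • x j‖ ^ q ≤ L ^ q * 𝔼 ε, ‖signedSum x ε‖ ^ q := by
  have h := ConvexDominated.sum_apply
    (fun j => convexDominated_sign_of_antiperiodic (hψ j) (hL j) (x j)) _ (convexOn_norm_rpow hq)
  refine h.trans_eq ?_
  rw [Finset.mul_expect]
  refine Finset.expect_congr rfl fun ε _ => ?_
  rw [← Real.mul_rpow hL0 (norm_nonneg _), ← norm_smul_of_nonneg hL0, ← signedSum_smul, signedSum]

end SignSums

section KahaneKhintchine

lemma one_add_pow_le_quadratic (N : ℕ) {u : ℝ} (hu : |u| ≤ 1) :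
    (1 + u) ^ N ≤ 1 + N * u + 4 ^ N * u ^ 2 := by
  obtain ⟨hu_lower, hu_upper⟩ := abs_le.1 hu
  induction N with
  | zero => simpa using sq_nonneg u
  | succ N ih =>
    have hN : (N : ℝ) ≤ 4 ^ N := by exact_mod_cast (Nat.lt_pow_self (by norm_num : 1 < 4)).le
    calc (1 + u) ^ (N + 1) ≤ (1 + N * u + 4 ^ N * u ^ 2) * (1 + u) := by
          rw [pow_succ]
          exact mul_le_mul_of_nonneg_right ih (by linarith)
      _ = 1 + (N + 1) * u + (N + 4 ^ N + 4 ^ N * u) * u ^ 2 := by ring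
      _ ≤ 1 + (N + 1) * u + (4 ^ N + 4 ^ N + 4 ^ N * 1) * u ^ 2 := by gcongr
      _ ≤ 1 + (N + 1 : ℕ) * u + 4 ^ (N + 1) * u ^ 2 := by
          rw [pow_succ 4]
          push_cast
          linarith [show (0 : ℝ) ≤ 4 ^ N * u ^ 2 by positivity]

variable {k : ℕ} {ρ : ℝ}

lemma one_add_pow_add_one_sub_pow_le (hk : 1 ≤ k) (hρ : 4 ^ k * |ρ| ≤ 1) {t : ℝ} (ht : |t| ≤ 1) :
    ((1 + ρ * t) ^ (2 * k) + (1 - ρ * t) ^ (2 * k)) / 2 ≤ (1 + t ^ 2) ^ k := by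
  have hρ1 : |ρ| ≤ 1 :=
    (le_mul_of_one_le_left (abs_nonneg ρ) (one_le_pow₀ (by norm_num))).trans hρ
  have hρt : |ρ * t| ≤ 1 := by
    rw [abs_mul]
    exact mul_le_one₀ hρ1 (abs_nonneg t) ht
  have hcoeff : (4 : ℝ) ^ (2 * k) * ρ ^ 2 ≤ 1 := by
    rw [mul_comm 2 k, pow_mul, ← sq_abs ρ, ← mul_pow]
    exact pow_le_one₀ (by positivity) hρ
  have hplus := one_add_pow_le_quadratic (2 * k) hρt
  have hminus := one_add_pow_le_quadratic (2 * k) (u := -(ρ * t)) (by rwa [abs_neg])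
  calc ((1 + ρ * t) ^ (2 * k) + (1 - ρ * t) ^ (2 * k)) / 2
      ≤ 1 + 4 ^ (2 * k) * ρ ^ 2 * t ^ 2 := by
        rw [sub_eq_add_neg]
        linarith
    _ ≤ 1 + k * t ^ 2 := by
        gcongr
        exact hcoeff.trans (by exact_mod_cast hk)
    _ ≤ (1 + t ^ 2) ^ k := one_add_mul_le_pow (by linarith [sq_nonneg t]) k

lemma add_pow_add_sub_pow_le (hk : 1 ≤ k) (hρ : 4 ^ k * |ρ| ≤ 1) {a b : ℝ} (hab : |b| ≤ a) :
    ((a + ρ * b) ^ (2 * k) + (a - ρ * b) ^ (2 * k)) / 2 ≤ (a ^ 2 + b ^ 2) ^ k := by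
  rcases ((abs_nonneg b).trans hab).eq_or_lt with rfl | ha
  · obtain rfl : b = 0 := by simpa using hab
    simp [show k ≠ 0 by lia]
  · obtain ⟨t, rfl⟩ : ∃ t, b = a * t := ⟨b / a, by field_simp⟩
    have ht : |t| ≤ 1 := by
      rw [abs_mul, abs_of_pos ha] at hab
      exact le_of_mul_le_mul_left (by linarith) ha
    calc ((a + ρ * (a * t)) ^ (2 * k) + (a - ρ * (a * t)) ^ (2 * k)) / 2
        = a ^ (2 * k) * (((1 + ρ * t) ^ (2 * k) + (1 - ρ * t) ^ (2 * k)) / 2) := by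
          rw [show a + ρ * (a * t) = a * (1 + ρ * t) by ring,
            show a - ρ * (a * t) = a * (1 - ρ * t) by ring, mul_pow, mul_pow]
          ring
      _ ≤ a ^ (2 * k) * (1 + t ^ 2) ^ k := by
          gcongr
          exact one_add_pow_add_one_sub_pow_le hk hρ ht
      _ = (a ^ 2 + (a * t) ^ 2) ^ k := by
          rw [pow_mul, ← mul_pow]
          ring

variable {X : Type*} [NormedAddCommGroup X] [NormedSpace ℝ X] {n : ℕ}

-- Both norms on the left are bounded by interpolating between `x + y` and `x - y`, which reduces
-- the claim to the scalars `(‖x + y‖ ± ‖x - y‖) / 2`.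
lemma norm_add_smul_pow_add_norm_sub_smul_pow_le (hk : 1 ≤ k) (hρ0 : 0 ≤ ρ) (hρ : 4 ^ k * ρ ≤ 1)
    (x y : X) : (‖x + ρ • y‖ ^ (2 * k) + ‖x - ρ • y‖ ^ (2 * k)) / 2 ≤
      ((‖x + y‖ ^ 2 + ‖x - y‖ ^ 2) / 2) ^ k := by
  have hρ1 : ρ ≤ 1 := (le_mul_of_one_le_left hρ0 (one_le_pow₀ (by norm_num))).trans hρ
  have norm_interpolation_le : ∀ s t : ℝ, 0 ≤ s → 0 ≤ t →
      ‖s • (x + y) + t • (x - y)‖ ≤ s * ‖x + y‖ + t * ‖x - y‖ := fun s t hs ht => by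
    simpa only [norm_smul_of_nonneg hs, norm_smul_of_nonneg ht] using
      norm_add_le (s • (x + y)) (t • (x - y))
  have hplus := norm_interpolation_le ((1 + ρ) / 2) ((1 - ρ) / 2) (by linarith) (by linarith)
  have hminus := norm_interpolation_le ((1 - ρ) / 2) ((1 + ρ) / 2) (by linarith) (by linarith)
  rw [show ((1 + ρ) / 2) • (x + y) + ((1 - ρ) / 2) • (x - y) = x + ρ • y by module] at hplus
  rw [show ((1 - ρ) / 2) • (x + y) + ((1 + ρ) / 2) • (x - y) = x - ρ • y by module] at hminus
  set p := ‖x + y‖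
  set r := ‖x - y‖
  calc (‖x + ρ • y‖ ^ (2 * k) + ‖x - ρ • y‖ ^ (2 * k)) / 2
      ≤ (((p + r) / 2 + ρ * ((p - r) / 2)) ^ (2 * k) +
          ((p + r) / 2 - ρ * ((p - r) / 2)) ^ (2 * k)) / 2 := by
        gcongr
        · linarith
        · linarith
    _ ≤ (((p + r) / 2) ^ 2 + ((p - r) / 2) ^ 2) ^ k :=
        add_pow_add_sub_pow_le hk (by rwa [abs_of_nonneg hρ0])
          (abs_le.2 ⟨by linarith [norm_nonneg (x + y)], by linarith [norm_nonneg (x - y)]⟩)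
    _ = ((p ^ 2 + r ^ 2) / 2) ^ k := by ring

lemma expect_signedSum_succ (F : X → ℝ) (x : Fin (n + 1) → X) :
    𝔼 ε, F (signedSum x ε) = 𝔼 ε, (F (x 0 + signedSum (fun i => x i.succ) ε) +
      F (-x 0 + signedSum (fun i => x i.succ) ε)) / 2 := by
  rw [expect_fin_succ_fun, Finset.expect_comm]
  simp only [expect_bool, signedSum, Fin.sum_univ_succ, Fin.cons_zero, Fin.cons_succ, if_true,
    Bool.false_eq_true, if_false, one_smul, neg_smul]

lemma expect_norm_add_smul_signedSum_pow_le (hk : 1 ≤ k) (hρ0 : 0 ≤ ρ) (hρ : 4 ^ k * ρ ≤ 1)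
    (x : Fin n → X) (z : X) :
    𝔼 ε, ‖z + ρ • signedSum x ε‖ ^ (2 * k) ≤ (𝔼 ε, ‖z + signedSum x ε‖ ^ 2) ^ k := by
  induction n generalizing z with
  | zero => simp [signedSum, pow_mul]
  | succ n ih =>
    set S := signedSum fun i => x i.succ
    set α : ℝ := 𝔼 ε, ‖z + x 0 + S ε‖ ^ 2 with hα
    set β : ℝ := 𝔼 ε, ‖z - x 0 + S ε‖ ^ 2 with hβ
    have minkowski : 𝔼 ε, (‖z + x 0 + ρ • S ε‖ ^ 2 + ‖z - x 0 + ρ • S ε‖ ^ 2) ^ k ≤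
        (α + β) ^ k := by
      have hihα := ih (fun i => x i.succ) (z + x 0)
      have hihβ := ih (fun i => x i.succ) (z - x 0)
      simp only [← Real.rpow_natCast _ k, pow_mul] at hihα hihβ ⊢
      exact expect_add_rpow_le (fun _ => sq_nonneg _) (fun _ => sq_nonneg _) (by exact_mod_cast hk)
        (Finset.expect_nonneg fun _ _ => sq_nonneg _)
        (Finset.expect_nonneg fun _ _ => sq_nonneg _) hihα hihβ
    rw [expect_signedSum_succ (fun y => ‖z + ρ • y‖ ^ (2 * k)),
      expect_signedSum_succ (fun y => ‖z + y‖ ^ 2)]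
    calc 𝔼 ε, (‖z + ρ • (x 0 + S ε)‖ ^ (2 * k) + ‖z + ρ • (-x 0 + S ε)‖ ^ (2 * k)) / 2
        ≤ 𝔼 ε, ((‖z + x 0 + ρ • S ε‖ ^ 2 + ‖z - x 0 + ρ • S ε‖ ^ 2) / 2) ^ k := by
          refine Finset.expect_le_expect fun ε _ => ?_
          rw [show z + ρ • (x 0 + S ε) = z + ρ • S ε + ρ • x 0 by module,
            show z + ρ • (-x 0 + S ε) = z + ρ • S ε - ρ • x 0 by module,
            add_right_comm z (x 0), ← add_sub_right_comm z]
          exact norm_add_smul_pow_add_norm_sub_smul_pow_le hk hρ0 hρ (z + ρ • S ε) (x 0)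
      _ = (𝔼 ε, (‖z + x 0 + ρ • S ε‖ ^ 2 + ‖z - x 0 + ρ • S ε‖ ^ 2) ^ k) / 2 ^ k := by
          simp only [div_pow, Finset.expect_div]
      _ ≤ (α + β) ^ k / 2 ^ k := by gcongr
      _ = (𝔼 ε, (‖z + (x 0 + S ε)‖ ^ 2 + ‖z + (-x 0 + S ε)‖ ^ 2) / 2) ^ k := by
          rw [← Finset.expect_div, Finset.expect_add_distrib, div_pow, hα, hβ]
          simp only [add_assoc, sub_eq_add_neg]

lemma expect_norm_signedSum_pow_le_sq (hk : 1 ≤ k) (x : Fin n → X) :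
    𝔼 ε, ‖signedSum x ε‖ ^ (2 * k) ≤ (4 ^ k) ^ (2 * k) * (𝔼 ε, ‖signedSum x ε‖ ^ 2) ^ k := by
  have h := expect_norm_add_smul_signedSum_pow_le (ρ := (4 ^ k)⁻¹) hk (by positivity)
    (mul_inv_cancel₀ (by positivity)).le x 0
  simp only [zero_add, norm_smul, mul_pow, ← Finset.mul_expect, norm_inv, norm_pow, inv_pow,
    Real.norm_ofNat] at h
  rwa [inv_mul_le_iff₀ (by positivity)] at h

lemma expect_sq_norm_signedSum_le (x : Fin n → X) :
    𝔼 ε, ‖signedSum x ε‖ ^ 2 ≤ (4 ^ 4 * 𝔼 ε, ‖signedSum x ε‖) ^ 2 := by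
  set a₂ := 𝔼 ε, ‖signedSum x ε‖ ^ 2
  have ha₂ : 0 ≤ a₂ := Finset.expect_nonneg fun _ _ => sq_nonneg _
  rcases ha₂.eq_or_lt with h0 | hpos
  · rw [← h0]
    positivity
  refine le_of_mul_le_mul_left ?_ (sq_pos_of_pos hpos)
  calc a₂ ^ 2 * a₂ = a₂ ^ 3 := by ring
    _ ≤ (𝔼 ε, ‖signedSum x ε‖) ^ 2 * 𝔼 ε, ‖signedSum x ε‖ ^ 4 :=
        expect_sq_pow_three_le fun _ => norm_nonneg _
    _ ≤ (𝔼 ε, ‖signedSum x ε‖) ^ 2 * ((4 ^ 2) ^ (2 * 2) * a₂ ^ 2) := by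
        gcongr
        exact expect_norm_signedSum_pow_le_sq one_le_two x
    _ = a₂ ^ 2 * (4 ^ 4 * 𝔼 ε, ‖signedSum x ε‖) ^ 2 := by ring

lemma expect_norm_signedSum_pow_le (hk : 1 ≤ k) (x : Fin n → X) :
    𝔼 ε, ‖signedSum x ε‖ ^ (2 * k) ≤ (4 ^ (k + 4) * 𝔼 ε, ‖signedSum x ε‖) ^ (2 * k) := by
  calc 𝔼 ε, ‖signedSum x ε‖ ^ (2 * k)
      ≤ (4 ^ k) ^ (2 * k) * (𝔼 ε, ‖signedSum x ε‖ ^ 2) ^ k := expect_norm_signedSum_pow_le_sq hk x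
    _ ≤ (4 ^ k) ^ (2 * k) * ((4 ^ 4 * 𝔼 ε, ‖signedSum x ε‖) ^ 2) ^ k := by
        gcongr
        exact expect_sq_norm_signedSum_le x
    _ = (4 ^ (k + 4) * 𝔼 ε, ‖signedSum x ε‖) ^ (2 * k) := by
        rw [← pow_mul _ 2 k, ← mul_pow, ← mul_assoc, ← pow_add]

variable (X) in
theorem exists_expect_norm_signedSum_rpow_le {p : ℝ} (hp : 0 < p) :
    ∃ K : ℝ, 0 < K ∧ ∀ (n : ℕ) (x : Fin n → X),
      𝔼 ε, ‖signedSum x ε‖ ^ p ≤ (K * 𝔼 ε, ‖signedSum x ε‖) ^ p := by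
  obtain ⟨k, hpk⟩ := exists_nat_ge p
  have hk : 1 ≤ k := Nat.cast_pos.1 (hp.trans_le hpk)
  refine ⟨4 ^ (k + 4), by positivity, fun n x => ?_⟩
  refine expect_rpow_le_of_expect_rpow_le (r := (2 * k : ℕ)) (fun _ => norm_nonneg _) hp
    (by push_cast; linarith) (by positivity) ?_
  simpa only [Real.rpow_natCast] using expect_norm_signedSum_pow_le hk x

end KahaneKhintchine

section Reformulations

variable {X : Type*} [NormedAddCommGroup X] {q : ℝ}

lemma rademacherCotype_iff_sum_norm_rpow_le [NormedSpace ℝ X] (hq : 0 < q) :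
    RademacherCotype X q ↔ ∃ C : ℝ, 0 < C ∧ ∀ (n : ℕ) (x : Fin n → X),
      ∑ i, ‖x i‖ ^ q ≤ (C * 𝔼 ε, ‖signedSum x ε‖) ^ q := by
  refine exists_congr fun C => and_congr_right fun hC => forall₂_congr fun n x => ?_
  have hE : ((2 : ℝ) ^ n)⁻¹ * ∑ ε : Fin n → Bool,
      ‖∑ i, (if ε i then (1 : ℝ) else -1) • x i‖ = 𝔼 ε, ‖signedSum x ε‖ := by
    simp [Fintype.expect_eq_sum_div_card, signedSum, div_eq_inv_mul]
  rw [hE, one_div, Real.rpow_inv_le_iff_of_pos (by positivity) (by positivity) hq]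

lemma metricCotype_sum_le_iff_expect_le {n m : ℕ} [NeZero m] (c : ℝ) (f : (Fin n → ZMod m) → X) :
    (∑ j : Fin n, ∑ x : Fin n → ZMod m,
        ‖f (x + fun i => if i = j then ((m / 2 : ℕ) : ZMod m) else 0) - f x‖ ^ q ≤
      c / 3 ^ n * ∑ ε : Fin n → ({-1, 0, 1} : Finset ℤ), ∑ x : Fin n → ZMod m,
        ‖f (x + fun i => ((ε i : ℤ) : ZMod m)) - f x‖ ^ q) ↔
    ∑ j, 𝔼 x, ‖f (x + Pi.single j ((m / 2 : ℕ) : ZMod m)) - f x‖ ^ q ≤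
      c * 𝔼 ε : Fin n → Ternary, 𝔼 x, ‖f (x + fun i => ((ε i : ℤ) : ZMod m)) - f x‖ ^ q := by
  have hsingle : ∀ j : Fin n, (fun i => if i = j then ((m / 2 : ℕ) : ZMod m) else 0) =
      Pi.single j ((m / 2 : ℕ) : ZMod m) := fun j => funext fun i => (Pi.single_apply j _ i).symm
  have hcard : (0 : ℝ) < (m : ℝ) ^ n := pow_pos (Nat.cast_pos.2 (NeZero.pos m)) n
  simp only [hsingle, Fintype.expect_eq_sum_div_card, Fintype.card_pi_const, Fintype.card_coe,
    ZMod.card, ← Finset.sum_div, Nat.cast_pow]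
  rw [div_le_iff₀ hcard]
  refine iff_of_eq (congrArg _ ?_)
  rw [Finset.card_insert_of_notMem (by decide), Finset.card_pair (by decide)]
  field_simp
  norm_num
  ring

/-- The metric cotype inequality on `ℤ_mⁿ` with constant `c`, with normalized sums over `ℤ_mⁿ` and
`{-1, 0, 1}ⁿ`. -/
def MetricCotypeInequality (X : Type*) [NormedAddCommGroup X] (q c : ℝ) (n m : ℕ) [NeZero m] :
    Prop :=
  ∀ f : (Fin n → ZMod m) → X,
    ∑ j, 𝔼 x, ‖f (x + Pi.single j ((m / 2 : ℕ) : ZMod m)) - f x‖ ^ q ≤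
      c ^ q * 𝔼 ε : Fin n → Ternary, 𝔼 x, ‖f (x + fun i => ((ε i : ℤ) : ZMod m)) - f x‖ ^ q

lemma metricCotype_iff_exists_metricCotypeInequality :
    MetricCotype X q ↔ ∃ C : ℝ, 0 < C ∧ ∀ n : ℕ, 0 < n → ∃ m : ℕ, ∃ _ : NeZero m, Even m ∧
      MetricCotypeInequality X q (C * m) n m := by
  refine exists_congr fun C => and_congr_right fun _ => forall₂_congr fun n _ =>
    exists_congr fun m => ⟨?_, ?_⟩
  · rintro ⟨hm, heven, h⟩
    exact ⟨⟨hm⟩, heven, fun f =>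
      have : NeZero m := ⟨hm⟩
      (metricCotype_sum_le_iff_expect_le _ f).1 (h f)⟩
  · rintro ⟨hm, heven, h⟩
    exact ⟨hm.out, heven, fun f => (metricCotype_sum_le_iff_expect_le _ f).2 (h f)⟩

end Reformulations

section TestFunctions

variable {X : Type*} [NormedAddCommGroup X] [NormedSpace ℝ X] {A : Type*} [AddCommGroup A] {n : ℕ}

/-- The map `y ↦ ∑ⱼ φ(yⱼ) xⱼ` with the same profile `φ` in every coordinate, on which the metric
cotype inequality is tested. -/
def separableMap (φ : A → ℝ) (x : Fin n → X) (y : Fin n → A) : X := ∑ j, φ (y j) • x j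

lemma norm_separableMap_add_single_sub {φ : A → ℝ} {c : A} (hφ : Function.Antiperiodic φ c)
    (x : Fin n → X) (y : Fin n → A) (j : Fin n) :
    ‖separableMap φ x (y + Pi.single j c) - separableMap φ x y‖ = |2 * φ (y j)| * ‖x j‖ := by
  have hdiff : separableMap φ x (y + Pi.single j c) - separableMap φ x y =
      -(2 * φ (y j)) • x j := by
    rw [separableMap, separableMap, ← Finset.sum_sub_distrib,
      Finset.sum_eq_single_of_mem j (Finset.mem_univ j) fun i _ hij => by simp [hij]]
    rw [Pi.add_apply, Pi.single_eq_same, hφ]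
    module
  rw [hdiff, norm_smul, norm_neg, Real.norm_eq_abs]

lemma expect_norm_separableMap_add_sub_rpow_le [Fintype A] {q : ℝ} (hq : 1 ≤ q) {φ : A → ℝ} {c : A}
    (hφ : Function.Antiperiodic φ c) {t : Fin n → A} {L : ℝ} (hL0 : 0 ≤ L)
    (hL : ∀ j z, |φ (z + t j) - φ z| ≤ L) (x : Fin n → X) :
    𝔼 y, ‖separableMap φ x (y + t) - separableMap φ x y‖ ^ q ≤
      L ^ q * 𝔼 ε, ‖signedSum x ε‖ ^ q := by
  have hdiff : ∀ y, separableMap φ x (y + t) - separableMap φ x y =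
      ∑ j, (φ (y j + t j) - φ (y j)) • x j := fun y => by
    simp only [separableMap, Pi.add_apply, sub_smul, Finset.sum_sub_distrib]
  simp only [hdiff]
  refine expect_norm_rpow_sum_le_of_antiperiodic hq (ψ := fun j z => φ (z + t j) - φ z) (c := c)
    (fun j z => ?_) hL hL0 x
  calc φ (z + c + t j) - φ (z + c) = -φ (z + t j) - -φ z := by rw [add_right_comm, hφ, hφ]
    _ = -(φ (z + t j) - φ z) := by ring

end TestFunctions

section StandardCharacter

variable {m : ℕ} [NeZero m]

lemma antiperiodic_stdAddChar (hm : Even m) :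
    Function.Antiperiodic (ZMod.stdAddChar : ZMod m → ℂ) ((m / 2 : ℕ) : ZMod m) := by
  have hm0 : (m : ℂ) ≠ 0 := Nat.cast_ne_zero.2 (NeZero.ne m)
  have half : ZMod.stdAddChar (((m / 2 : ℕ) : ℤ) : ZMod m) = (-1 : ℂ) := by
    rw [ZMod.stdAddChar_coe, ← Complex.exp_pi_mul_I, Int.cast_natCast,
      Nat.cast_div hm.two_dvd two_ne_zero]
    congr 1
    push_cast
    field_simp
  intro z
  rw [Int.cast_natCast] at half
  rw [AddChar.map_add_eq_mul, half, mul_neg_one]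

lemma norm_stdAddChar_add_intCast_sub_le (z : ZMod m) (t : ℤ) :
    ‖(ZMod.stdAddChar (z + (t : ZMod m)) - ZMod.stdAddChar z : ℂ)‖ ≤ 2 * Real.pi / m * |t| := by
  have hm : (0 : ℝ) < m := Nat.cast_pos.2 (NeZero.pos m)
  have hexponent : 2 * Real.pi * Complex.I * t / m =
      Complex.I * ((2 * Real.pi / m * t : ℝ) : ℂ) := by
    push_cast
    ring
  calc ‖(ZMod.stdAddChar (z + (t : ZMod m)) - ZMod.stdAddChar z : ℂ)‖
      = ‖(ZMod.stdAddChar (t : ZMod m) - 1 : ℂ)‖ := by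
        rw [AddChar.map_add_eq_mul, ← mul_sub_one, norm_mul, AddChar.norm_apply, one_mul]
    _ ≤ ‖2 * Real.pi / m * (t : ℝ)‖ := by
        rw [ZMod.stdAddChar_coe, hexponent]
        exact Real.norm_exp_I_mul_ofReal_sub_one_le
    _ = 2 * Real.pi / m * |t| := by
        rw [norm_mul, Real.norm_of_nonneg (by positivity), Real.norm_eq_abs, Int.cast_abs]

end StandardCharacter

lemma one_le_abs_two_re_rpow_add_abs_two_im_rpow {z : ℂ} (hz : ‖z‖ = 1) {q : ℝ} (hq : 0 ≤ q) :
    1 ≤ |2 * z.re| ^ q + |2 * z.im| ^ q := by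
  have hsq : z.re ^ 2 + z.im ^ 2 = 1 := by
    rw [← Complex.sq_norm_sub_sq_re z, hz]
    ring
  rcases le_or_gt 1 |2 * z.re| with hre | hre
  · exact (Real.one_le_rpow hre hq).trans (le_add_of_nonneg_right (by positivity))
  · have him : 1 ≤ |2 * z.im| := by
      rw [← one_le_sq_iff_one_le_abs]
      have := (sq_lt_one_iff_abs_lt_one _).2 hre
      nlinarith
    exact (Real.one_le_rpow him hq).trans (le_add_of_nonneg_left (by positivity))

section MetricToRademacher

variable {X : Type*} [NormedAddCommGroup X] [NormedSpace ℝ X] {q : ℝ}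

lemma MetricCotypeInequality.sum_expect_abs_rpow_le {n m : ℕ} [NeZero m] {c L : ℝ} (hc : 0 ≤ c)
    (h : MetricCotypeInequality X q c n m) (hq : 1 ≤ q) {φ : ZMod m → ℝ}
    (hφ : Function.Antiperiodic φ ((m / 2 : ℕ) : ZMod m)) (hL : 0 ≤ L)
    (hφL : ∀ (t : Ternary) (z : ZMod m), |φ (z + ((t : ℤ) : ZMod m)) - φ z| ≤ L) (x : Fin n → X) :
    ∑ j, 𝔼 y : Fin n → ZMod m, |2 * φ (y j)| ^ q * ‖x j‖ ^ q ≤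
      (c * L) ^ q * 𝔼 ε, ‖signedSum x ε‖ ^ q := by
  calc ∑ j, 𝔼 y : Fin n → ZMod m, |2 * φ (y j)| ^ q * ‖x j‖ ^ q
      = ∑ j, 𝔼 y, ‖separableMap φ x (y + Pi.single j ((m / 2 : ℕ) : ZMod m)) -
          separableMap φ x y‖ ^ q := by
        simp only [norm_separableMap_add_single_sub hφ,
          Real.mul_rpow (abs_nonneg _) (norm_nonneg _)]
    _ ≤ c ^ q * 𝔼 ε : Fin n → Ternary, 𝔼 y, ‖separableMap φ x
          (y + fun i => ((ε i : ℤ) : ZMod m)) - separableMap φ x y‖ ^ q := by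
        exact h (separableMap φ x)
    _ ≤ c ^ q * 𝔼 _ε : Fin n → Ternary, L ^ q * 𝔼 ε, ‖signedSum x ε‖ ^ q := by
        refine mul_le_mul_of_nonneg_left (Finset.expect_le_expect fun ε _ => ?_) (by positivity)
        exact expect_norm_separableMap_add_sub_rpow_le hq hφ hL (fun j => hφL (ε j)) x
    _ = (c * L) ^ q * 𝔼 ε, ‖signedSum x ε‖ ^ q := by
        rw [Fintype.expect_const, ← mul_assoc, Real.mul_rpow hc hL]

lemma MetricCotypeInequality.sum_expect_abs_stdAddChar_rpow_le {n m : ℕ} [NeZero m] {C : ℝ}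
    (hC : 0 ≤ C) (h : MetricCotypeInequality X q (C * m) n m) (hm : Even m) (hq : 1 ≤ q)
    {l : ℂ →ₗ[ℝ] ℝ} (hl : ∀ z, |l z| ≤ ‖z‖) (x : Fin n → X) :
    ∑ j, 𝔼 y : Fin n → ZMod m, |2 * l (ZMod.stdAddChar (y j))| ^ q * ‖x j‖ ^ q ≤
      (2 * Real.pi * C) ^ q * 𝔼 ε, ‖signedSum x ε‖ ^ q := by
  have hm0 : (m : ℝ) ≠ 0 := Nat.cast_ne_zero.2 (NeZero.ne m)
  have antiperiodic : Function.Antiperiodic (fun z : ZMod m => l (ZMod.stdAddChar z))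
      ((m / 2 : ℕ) : ZMod m) := fun z => by
    simp only [antiperiodic_stdAddChar hm z, map_neg]
  have lipschitz : ∀ (t : Ternary) (z : ZMod m),
      |l (ZMod.stdAddChar (z + ((t : ℤ) : ZMod m))) - l (ZMod.stdAddChar z)| ≤ 2 * Real.pi / m :=
    fun t z => by
      have ht : ((|(t : ℤ)| : ℤ) : ℝ) ≤ 1 := by exact_mod_cast t.abs_le_one
      rw [← map_sub]
      exact (hl _).trans <| (norm_stdAddChar_add_intCast_sub_le z t).trans <|
        mul_le_of_le_one_right (by positivity) ht
  have hscale : C * m * (2 * Real.pi / m) = 2 * Real.pi * C := by field_simp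
  rw [← hscale]
  exact h.sum_expect_abs_rpow_le (by positivity) hq antiperiodic (by positivity) lipschitz x

lemma MetricCotypeInequality.sum_norm_rpow_le {n m : ℕ} [NeZero m] {C : ℝ}
    (hC : 0 ≤ C) (h : MetricCotypeInequality X q (C * m) n m) (hm : Even m) (hq : 1 ≤ q)
    (x : Fin n → X) :
    ∑ j, ‖x j‖ ^ q ≤ 2 * ((2 * Real.pi * C) ^ q * 𝔼 ε, ‖signedSum x ε‖ ^ q) := by
  have hq0 : 0 ≤ q := by linarith
  have hre := h.sum_expect_abs_stdAddChar_rpow_le hC hm hq (l := Complex.reLm)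
    Complex.abs_re_le_norm x
  have him := h.sum_expect_abs_stdAddChar_rpow_le hC hm hq (l := Complex.imLm)
    Complex.abs_im_le_norm x
  refine le_trans ?_ ((add_le_add hre him).trans_eq (two_mul _).symm)
  rw [← Finset.sum_add_distrib]
  refine Finset.sum_le_sum fun j _ => ?_
  rw [← Finset.expect_add_distrib]
  refine (Fintype.expect_const (ι := Fin n → ZMod m) _).symm.trans_le
    (Finset.expect_le_expect fun y _ => ?_)
  rw [← add_mul]
  exact le_mul_of_one_le_left (by positivity)
    (one_le_abs_two_re_rpow_add_abs_two_im_rpow (AddChar.norm_apply ZMod.stdAddChar (y j)) hq0)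

theorem MetricCotype.rademacherCotype (hq : 1 ≤ q) (h : MetricCotype X q) :
    RademacherCotype X q := by
  have hq0 : 0 < q := by linarith
  obtain ⟨C, hC, hmetric⟩ := metricCotype_iff_exists_metricCotypeInequality.1 h
  obtain ⟨K, hK, hkahane⟩ := exists_expect_norm_signedSum_rpow_le X hq0
  refine (rademacherCotype_iff_sum_norm_rpow_le hq0).2
    ⟨2 * (2 * Real.pi * C) * K, by positivity, fun n x => ?_⟩
  rcases n.eq_zero_or_pos with rfl | hn
  · simpa using Real.rpow_nonneg (by positivity) q
  obtain ⟨m, _, hm, hf⟩ := hmetric n hn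
  have two_le : (2 : ℝ) ≤ 2 ^ q := Real.self_le_rpow_of_one_le one_le_two hq
  calc ∑ j, ‖x j‖ ^ q
      ≤ 2 * ((2 * Real.pi * C) ^ q * 𝔼 ε, ‖signedSum x ε‖ ^ q) :=
        hf.sum_norm_rpow_le hC.le hm hq x
    _ ≤ 2 ^ q * ((2 * Real.pi * C) ^ q * (K * 𝔼 ε, ‖signedSum x ε‖) ^ q) := by
        gcongr
        exact hkahane n x
    _ = (2 * (2 * Real.pi * C) * K * 𝔼 ε, ‖signedSum x ε‖) ^ q := by
        rw [← Real.mul_rpow (by positivity) (by positivity),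
          ← Real.mul_rpow (by positivity) (by positivity)]
        ring_nf

end MetricToRademacher

section Smoothing

variable {A E : Type*} [AddCommGroup A] [NormedAddCommGroup E] [NormedSpace ℝ E]
  (T : AddChar A (E →ₗᵢ[ℝ] E))

lemma addChar_add_apply (a b : A) (h : E) : T (a + b) h = T a (T b h) := by
  rw [AddChar.map_add_eq_mul, LinearIsometry.coe_mul, Function.comp_apply]

lemma addChar_zero_apply (h : E) : T 0 h = h := by
  rw [AddChar.map_zero_eq_one, LinearIsometry.coe_one, id_eq]

lemma addChar_apply_comm (a b : A) (h : E) : T a (T b h) = T b (T a h) := by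
  rw [← addChar_add_apply, add_comm, addChar_add_apply]

lemma norm_addChar_nsmul_sub_le (a : A) (h : E) (k : ℕ) :
    ‖T (k • a) h - h‖ ≤ k * ‖T a h - h‖ := by
  induction k with
  | zero => simp
  | succ k ih =>
    have hsplit : T ((k + 1) • a) h - h = T (k • a) (T a h - h) + (T (k • a) h - h) := by
      rw [succ_nsmul, addChar_add_apply, map_sub]
      abel
    calc ‖T ((k + 1) • a) h - h‖ ≤ ‖T a h - h‖ + ‖T (k • a) h - h‖ := by
          rw [hsplit, ← (T (k • a)).norm_map (T a h - h)]
          exact norm_add_le _ _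
      _ ≤ (k + 1 : ℕ) * ‖T a h - h‖ := by
          push_cast
          linarith

/-- The average `K⁻¹ ∑_{t < K} T(t a)` of a representation by isometries over an initial segment of
the orbit of `a`. -/
noncomputable def orbitAverage (a : A) (K : ℕ) : E →ₗ[ℝ] E :=
  (K : ℝ)⁻¹ • ∑ t ∈ Finset.range K, (T (t • a)).toLinearMap

lemma orbitAverage_apply (a : A) (K : ℕ) (h : E) :
    orbitAverage T a K h = (K : ℝ)⁻¹ • ∑ t ∈ Finset.range K, T (t • a) h := by
  simp [orbitAverage, LinearMap.sum_apply]

lemma addChar_orbitAverage_comm (a b : A) (K : ℕ) (h : E) :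
    T b (orbitAverage T a K h) = orbitAverage T a K (T b h) := by
  simp only [orbitAverage_apply, map_smul, map_sum, addChar_apply_comm T b]

lemma norm_orbitAverage_le (a : A) (K : ℕ) (h : E) : ‖orbitAverage T a K h‖ ≤ ‖h‖ := by
  rw [orbitAverage_apply, norm_smul_of_nonneg (by positivity)]
  calc (K : ℝ)⁻¹ * ‖∑ t ∈ Finset.range K, T (t • a) h‖
      ≤ (K : ℝ)⁻¹ * ∑ t ∈ Finset.range K, ‖T (t • a) h‖ := by
        gcongr
        exact norm_sum_le _ _
    _ = (K : ℝ)⁻¹ * K * ‖h‖ := by simp [mul_assoc]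
    _ ≤ ‖h‖ := mul_le_of_le_one_left (norm_nonneg h) inv_mul_le_one

lemma norm_addChar_orbitAverage_sub_le (a : A) (K : ℕ) (h : E) :
    ‖T a (orbitAverage T a K h) - orbitAverage T a K h‖ ≤ 2 / K * ‖h‖ := by
  have htelescope : T a (orbitAverage T a K h) - orbitAverage T a K h =
      (K : ℝ)⁻¹ • (T (K • a) h - h) := by
    rw [addChar_orbitAverage_comm]
    simp only [orbitAverage_apply, ← addChar_add_apply, ← succ_nsmul]
    rw [← smul_sub, ← Finset.sum_sub_distrib, Finset.sum_range_sub fun t => T (t • a) h, zero_nsmul,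
      addChar_zero_apply]
  rw [htelescope, norm_smul_of_nonneg (by positivity)]
  calc (K : ℝ)⁻¹ * ‖T (K • a) h - h‖ ≤ (K : ℝ)⁻¹ * (‖T (K • a) h‖ + ‖h‖) := by
        gcongr
        exact norm_sub_le _ _
    _ = 2 / K * ‖h‖ := by
        rw [LinearIsometry.norm_map]
        ring

lemma norm_orbitAverage_sub_le (a : A) {K : ℕ} (hK : K ≠ 0) (h : E) :
    ‖orbitAverage T a K h - h‖ ≤ K * ‖T a h - h‖ := by
  have hK0 : (K : ℝ) ≠ 0 := Nat.cast_ne_zero.2 hK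
  have hmean : orbitAverage T a K h - h =
      (K : ℝ)⁻¹ • ∑ t ∈ Finset.range K, (T (t • a) h - h) := by
    rw [orbitAverage_apply, Finset.sum_sub_distrib, smul_sub, Finset.sum_const, Finset.card_range,
      ← Nat.cast_smul_eq_nsmul ℝ, inv_smul_smul₀ hK0]
  rw [hmean, norm_smul_of_nonneg (by positivity), inv_mul_le_iff₀ (by positivity)]
  calc ‖∑ t ∈ Finset.range K, (T (t • a) h - h)‖
      ≤ ∑ t ∈ Finset.range K, ‖T (t • a) h - h‖ := norm_sum_le _ _
    _ ≤ ∑ _t ∈ Finset.range K, (K : ℝ) * ‖T a h - h‖ := by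
        refine Finset.sum_le_sum fun t ht => (norm_addChar_nsmul_sub_le T a h t).trans ?_
        gcongr
        exact (Finset.mem_range.1 ht).le
    _ = K * (K * ‖T a h - h‖) := by simp

/-- `P` is a smoothing operator for the directions in `s` at scale `K`: a contraction commuting with
the representation `T`, whose values are moved by at most `2 / K` along `s`, and which is close to
the identity on vectors that are almost invariant along `s`. -/
structure IsSmoothing (K : ℕ) (s : Finset A) (P : E →ₗ[ℝ] E) : Prop where
  comm : ∀ b h, T b (P h) = P (T b h)
  norm_le : ∀ h, ‖P h‖ ≤ ‖h‖
  norm_map_sub_le : ∀ a ∈ s, ∀ h, ‖T a (P h) - P h‖ ≤ 2 / K * ‖h‖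
  norm_sub_le : ∀ h, ‖P h - h‖ ≤ K * ∑ a ∈ s, ‖T a h - h‖

variable {T}

lemma IsSmoothing.orbitAverage_comp [DecidableEq A] {K : ℕ} (hK : K ≠ 0) {s : Finset A}
    {P : E →ₗ[ℝ] E} (hP : IsSmoothing T K s P) {a : A} (ha : a ∉ s) :
    IsSmoothing T K (insert a s) (orbitAverage T a K ∘ₗ P) where
  comm b h := by
    rw [LinearMap.comp_apply, LinearMap.comp_apply, addChar_orbitAverage_comm, hP.comm]
  norm_le h := (norm_orbitAverage_le T a K _).trans (hP.norm_le h)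
  norm_map_sub_le b hb h := by
    rw [LinearMap.comp_apply]
    rcases Finset.mem_insert.1 hb with rfl | hbs
    · refine (norm_addChar_orbitAverage_sub_le T b K _).trans ?_
      gcongr
      exact hP.norm_le h
    · rw [addChar_orbitAverage_comm, ← map_sub]
      exact (norm_orbitAverage_le T a K _).trans (hP.norm_map_sub_le b hbs h)
  norm_sub_le h := by
    have hsplit : (orbitAverage T a K ∘ₗ P) h - h =
        orbitAverage T a K (P h - h) + (orbitAverage T a K h - h) := by
      rw [LinearMap.comp_apply, map_sub]
      abel
    rw [hsplit, Finset.sum_insert ha, mul_add, add_comm]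
    exact norm_add_le_of_le (norm_orbitAverage_sub_le T a hK h)
      ((norm_orbitAverage_le T a K _).trans (hP.norm_sub_le h))

variable (T) in
lemma exists_isSmoothing {K : ℕ} (hK : K ≠ 0) (s : Finset A) : ∃ P, IsSmoothing T K s P := by
  classical
  induction s using Finset.induction_on with
  | empty => exact ⟨LinearMap.id, by simp, by simp, by simp, by simp⟩
  | insert a s ha ih =>
    obtain ⟨P, hP⟩ := ih
    exact ⟨_, hP.orbitAverage_comp hK ha⟩

end Smoothing

section QuasiAdditive

variable {ι E : Type*} [DecidableEq ι] [SeminormedAddCommGroup E] {D : (ι → ℤ) → E} {η : ℝ}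

lemma single_mem_Icc_neg_one_one {c : ℤ} (hc : c ∈ Set.Icc (-1) 1) (i : ι) :
    (Pi.single i c : ι → ℤ) ∈ Set.Icc (-1) 1 := by
  refine ⟨fun j => ?_, fun j => ?_⟩ <;> rcases eq_or_ne j i with rfl | hij
  · simpa using hc.1
  · simp [hij]
  · simpa using hc.2
  · simp [hij]

lemma norm_apply_single_sub_zsmul_le (hD0 : D 0 = 0)
    (hD : ∀ a ∈ Set.Icc (-1) 1, ∀ b ∈ Set.Icc (-1) 1, ‖D (a + b) - D a - D b‖ ≤ η)
    (i : ι) {c : ℤ} (hc : c ∈ Set.Icc (-1) 1) :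
    ‖D (Pi.single i c) - c • D (Pi.single i 1)‖ ≤ η := by
  have hη : 0 ≤ η := (norm_nonneg _).trans (hD 0 (by simp) 0 (by simp))
  have hc' : c = -1 ∨ c = 0 ∨ c = 1 := by
    obtain ⟨hlo, hhi⟩ := hc
    omega
  rcases hc' with rfl | rfl | rfl
  · have h := hD _ (single_mem_Icc_neg_one_one (c := 1) (by simp) i) _
      (single_mem_Icc_neg_one_one hc i)
    rw [← Pi.single_add, add_neg_cancel, Pi.single_zero, hD0, zero_sub, ← neg_add', norm_neg] at h
    rwa [neg_one_zsmul, sub_neg_eq_add, add_comm]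
  · simpa [hD0] using hη
  · simpa using hη

lemma norm_apply_sum_single_sub_sum_zsmul_le (hD0 : D 0 = 0)
    (hD : ∀ a ∈ Set.Icc (-1) 1, ∀ b ∈ Set.Icc (-1) 1, ‖D (a + b) - D a - D b‖ ≤ η)
    {a : ι → ℤ} (ha : a ∈ Set.Icc (-1) 1) (s : Finset ι) :
    ‖D (∑ i ∈ s, Pi.single i (a i)) - ∑ i ∈ s, a i • D (Pi.single i 1)‖ ≤ s.card * (2 * η) := by
  have hai : ∀ i, a i ∈ Set.Icc (-1) 1 := fun i => ⟨ha.1 i, ha.2 i⟩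
  have hmem : ∀ t : Finset ι, ∑ i ∈ t, Pi.single i (a i) ∈ Set.Icc (-1 : ι → ℤ) 1 := fun t => by
    refine ⟨fun i => ?_, fun i => ?_⟩ <;> rw [Finset.sum_apply, Finset.sum_pi_single] <;> split_ifs
    exacts [ha.1 i, neg_one_lt_zero.le, ha.2 i, zero_le_one]
  induction s using Finset.induction_on with
  | empty => simp [hD0]
  | insert j s hj ih =>
    set b : ι → ℤ := ∑ i ∈ s, Pi.single i (a i) with hb
    rw [Finset.sum_insert hj, Finset.sum_insert hj, Finset.card_insert_of_notMem hj, ← hb]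
    have hjoin := hD _ (single_mem_Icc_neg_one_one (hai j) j) b (hmem s)
    have hsingle := norm_apply_single_sub_zsmul_le hD0 hD j (hai j)
    calc _ = ‖(D (Pi.single j (a j) + b) - D (Pi.single j (a j)) - D b) +
            (D (Pi.single j (a j)) - a j • D (Pi.single j 1)) +
            (D b - ∑ i ∈ s, a i • D (Pi.single i 1))‖ := by
          congr 1
          abel
      _ ≤ η + η + s.card * (2 * η) :=
          norm_add_le_of_le (norm_add_le_of_le hjoin hsingle) ih
      _ = (s.card + 1 : ℕ) * (2 * η) := by
          push_cast
          ring

lemma norm_apply_sub_sum_zsmul_le [Fintype ι] (hD0 : D 0 = 0)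
    (hD : ∀ a ∈ Set.Icc (-1) 1, ∀ b ∈ Set.Icc (-1) 1, ‖D (a + b) - D a - D b‖ ≤ η)
    {a : ι → ℤ} (ha : a ∈ Set.Icc (-1) 1) :
    ‖D a - ∑ i, a i • D (Pi.single i 1)‖ ≤ Fintype.card ι * (2 * η) := by
  have h := norm_apply_sum_single_sub_sum_zsmul_le hD0 hD ha Finset.univ
  rwa [Finset.univ_sum_single, Finset.card_univ] at h

end QuasiAdditive

lemma norm_piLp_ofReal_rpow {ι X : Type*} [Fintype ι] [NormedAddCommGroup X] {q : ℝ}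
    [Fact (1 ≤ ENNReal.ofReal q)] (F : PiLp (ENNReal.ofReal q) fun _ : ι => X) :
    ‖F‖ ^ q = ∑ i, ‖F i‖ ^ q := by
  have hq : 1 ≤ q := ENNReal.one_le_ofReal.1 Fact.out
  have htoReal : (ENNReal.ofReal q).toReal = q := ENNReal.toReal_ofReal (by linarith)
  rw [PiLp.norm_eq_sum (by linarith), htoReal, one_div,
    Real.rpow_inv_rpow (by positivity) (by linarith)]

section TernaryCotype

variable {X : Type*} [NormedAddCommGroup X] [NormedSpace ℝ X] {q C : ℝ}

/-- Cotype `q` with constant `C`, formulated with coefficients in `{-1, 0, 1}` and with `q`-th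
moments on both sides, which is the form that passes to `ℓ_q`-sums. -/
def TernaryCotypeWith (X : Type*) [NormedAddCommGroup X] [NormedSpace ℝ X] (q C : ℝ) : Prop :=
  ∀ (n : ℕ) (x : Fin n → X), ∑ j, ‖x j‖ ^ q ≤ C ^ q * 𝔼 ε, ‖ternarySum x ε‖ ^ q

lemma RademacherCotype.exists_ternaryCotypeWith (hq : 1 ≤ q) (h : RademacherCotype X q) :
    ∃ C : ℝ, 0 < C ∧ TernaryCotypeWith X q C := by
  obtain ⟨C, hC, hcotype⟩ := (rademacherCotype_iff_sum_norm_rpow_le (by linarith)).1 h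
  refine ⟨C * (3 / 2), by positivity, fun n x => ?_⟩
  have hnonneg : 0 ≤ 𝔼 ε, ‖ternarySum x ε‖ := Finset.expect_nonneg fun _ _ => norm_nonneg _
  calc ∑ j, ‖x j‖ ^ q ≤ (C * 𝔼 ε, ‖signedSum x ε‖) ^ q := hcotype n x
    _ ≤ (C * (3 / 2) * 𝔼 ε, ‖ternarySum x ε‖) ^ q := by
        rw [mul_assoc]
        gcongr
        exact expect_norm_signedSum_le_ternarySum x
    _ = (C * (3 / 2)) ^ q * (𝔼 ε, ‖ternarySum x ε‖) ^ q :=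
        Real.mul_rpow (by positivity) hnonneg
    _ ≤ (C * (3 / 2)) ^ q * 𝔼 ε, ‖ternarySum x ε‖ ^ q := by
        gcongr
        exact rpow_expect_le (fun _ => norm_nonneg _) hq

variable {ι : Type*} [Fintype ι] [Fact (1 ≤ ENNReal.ofReal q)]

lemma TernaryCotypeWith.piLp (h : TernaryCotypeWith X q C) :
    TernaryCotypeWith (PiLp (ENNReal.ofReal q) fun _ : ι => X) q C := by
  intro n F
  have hcoord : ∀ ε i, ternarySum F ε i = ternarySum (fun j => F j i) ε := fun ε i => by
    simp [ternarySum]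
  simp only [norm_piLp_ofReal_rpow, hcoord]
  rw [Finset.sum_comm, Finset.expect_sum_comm, Finset.mul_sum]
  exact Finset.sum_le_sum fun i _ => h n fun j => F j i

end TernaryCotype

section Displacement

variable {E : Type*} [NormedAddCommGroup E] [NormedSpace ℝ E] {n : ℕ}
  {T : AddChar (Fin n → ℤ) (E →ₗᵢ[ℝ] E)} {q : ℝ}

lemma exists_ternary_coe_eq {ι : Type*} {a : ι → ℤ} (ha : a ∈ Set.Icc (-1) 1) :
    ∃ ε : ι → Ternary, (fun i => (ε i : ℤ)) = a := by
  refine ⟨fun i => ⟨a i, ?_⟩, rfl⟩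
  have hlo : -1 ≤ a i := ha.1 i
  have hhi : a i ≤ 1 := ha.2 i
  simp only [Finset.mem_insert, Finset.mem_singleton]
  omega

lemma ternary_coe_mem_Icc {ι : Type*} (ε : ι → Ternary) :
    (fun i => (ε i : ℤ)) ∈ Set.Icc (-1 : ι → ℤ) 1 :=
  ⟨fun i => (abs_le.1 (ε i).abs_le_one).1, fun i => (abs_le.1 (ε i).abs_le_one).2⟩

/-- The `L_q`-mean of the displacement `‖T(ε) F - F‖` over `ε ∈ {-1, 0, 1}ⁿ`. -/
noncomputable def meanDisplacement (T : AddChar (Fin n → ℤ) (E →ₗᵢ[ℝ] E)) (q : ℝ) (F : E) : ℝ :=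
  (𝔼 ε : Fin n → Ternary, ‖T (fun i => (ε i : ℤ)) F - F‖ ^ q) ^ q⁻¹

lemma expect_norm_addChar_sub_rpow_nonneg (F : E) :
    0 ≤ 𝔼 ε : Fin n → Ternary, ‖T (fun i => (ε i : ℤ)) F - F‖ ^ q :=
  Finset.expect_nonneg fun _ _ => by positivity

lemma meanDisplacement_nonneg (F : E) : 0 ≤ meanDisplacement T q F :=
  Real.rpow_nonneg (expect_norm_addChar_sub_rpow_nonneg F) _

lemma meanDisplacement_rpow (hq : q ≠ 0) (F : E) :
    meanDisplacement T q F ^ q = 𝔼 ε : Fin n → Ternary, ‖T (fun i => (ε i : ℤ)) F - F‖ ^ q :=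
  Real.rpow_inv_rpow (expect_norm_addChar_sub_rpow_nonneg F) hq

lemma norm_addChar_sub_le_meanDisplacement (hq : 1 ≤ q) (F : E) {a : Fin n → ℤ}
    (ha : a ∈ Set.Icc (-1) 1) : ‖T a F - F‖ ≤ 3 ^ n * meanDisplacement T q F := by
  have hq0 : 0 < q := by linarith
  have hmean := meanDisplacement_nonneg (T := T) (q := q) F
  obtain ⟨ε, rfl⟩ := exists_ternary_coe_eq ha
  rw [← Real.rpow_le_rpow_iff (norm_nonneg _) (by positivity) hq0,
    Real.mul_rpow (by positivity) hmean]
  calc ‖T (fun i => (ε i : ℤ)) F - F‖ ^ q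
      ≤ ∑ δ : Fin n → Ternary, ‖T (fun i => (δ i : ℤ)) F - F‖ ^ q :=
        Finset.single_le_sum (f := fun δ : Fin n → Ternary => ‖T (fun i => (δ i : ℤ)) F - F‖ ^ q)
          (fun _ _ => by positivity) (Finset.mem_univ ε)
    _ = 3 ^ n * meanDisplacement T q F ^ q := by
        rw [meanDisplacement_rpow hq0.ne', Fintype.expect_eq_sum_div_card]
        simp [mul_div_cancel₀]
    _ ≤ (3 ^ n) ^ q * meanDisplacement T q F ^ q := by
        gcongr
        exact Real.self_le_rpow_of_one_le (one_le_pow₀ (by norm_num)) hq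

variable {K : ℕ} {P : E →ₗ[ℝ] E}

lemma IsSmoothing.norm_map_map_sub_le {A : Type*} [AddCommGroup A] {T : AddChar A (E →ₗᵢ[ℝ] E)}
    {s : Finset A} (hP : IsSmoothing T K s P) {a : A} (ha : a ∈ s) (b : A) (F : E) :
    ‖(T (a + b) (P F) - P F) - (T a (P F) - P F) - (T b (P F) - P F)‖ ≤
      2 / K * ‖T b F - F‖ := by
  have hdiff : (T (a + b) (P F) - P F) - (T a (P F) - P F) - (T b (P F) - P F) =
      T a (P (T b F - F)) - P (T b F - F) := by
    rw [addChar_add_apply, map_sub P, map_sub, hP.comm b]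
    abel
  rw [hdiff]
  exact hP.norm_map_sub_le a ha _

lemma IsSmoothing.norm_sub_ternarySum_le (hP : IsSmoothing T K (Finset.Icc (-1) 1) P) {F : E}
    {B : ℝ} (hB : ∀ a ∈ Set.Icc (-1) 1, ‖T a F - F‖ ≤ B) (ε : Fin n → Ternary) :
    ‖T (fun i => (ε i : ℤ)) (P F) - P F -
      ternarySum (fun j => T (Pi.single j 1) (P F) - P F) ε‖ ≤ n * (2 * (2 / K * B)) := by
  have h := norm_apply_sub_sum_zsmul_le (D := fun a => T a (P F) - P F) (η := 2 / K * B)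
    (by simp) (fun a ha b hb => (hP.norm_map_map_sub_le (Finset.mem_Icc.2 ha) b F).trans <| by
      gcongr
      exact hB b hb) (ternary_coe_mem_Icc ε)
  simpa only [ternarySum, Int.cast_smul_eq_zsmul, Fintype.card_fin] using h

-- At this scale `K` the accumulated error `n * (2 * (2 / K * (3 ^ n * A)))` of additivity is
-- exactly the mean displacement `A`.
lemma IsSmoothing.expect_norm_ternarySum_rpow_le (hP : IsSmoothing T K (Finset.Icc (-1) 1) P)
    (hq : 1 ≤ q) (hK : (K : ℝ) = 4 * n * 3 ^ n) (hn : n ≠ 0) (F : E) :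
    𝔼 ε, ‖ternarySum (fun j => T (Pi.single j 1) (P F) - P F) ε‖ ^ q ≤
      (2 * meanDisplacement T q F) ^ q := by
  have hq0 : 0 < q := by linarith
  have hmean := meanDisplacement_nonneg (T := T) (q := q) F
  have herror : ∀ ε : Fin n → Ternary, ‖T (fun i => (ε i : ℤ)) (P F) - P F -
      ternarySum (fun j => T (Pi.single j 1) (P F) - P F) ε‖ ≤ meanDisplacement T q F := fun ε => by
    refine (hP.norm_sub_ternarySum_le
      (fun a ha => norm_addChar_sub_le_meanDisplacement hq F ha) ε).trans_eq ?_
    rw [hK]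
    field_simp
    norm_num
  have hcontract : ∀ a, ‖T a (P F) - P F‖ ≤ ‖T a F - F‖ := fun a => by
    rw [hP.comm, ← map_sub]
    exact hP.norm_le _
  rw [two_mul]
  refine le_trans (Finset.expect_le_expect fun ε _ => ?_) (expect_add_rpow_le
    (f := fun ε : Fin n → Ternary => ‖T (fun i => (ε i : ℤ)) F - F‖)
    (g := fun _ => meanDisplacement T q F) (fun _ => norm_nonneg _) (fun _ => hmean) hq hmean hmean
    (meanDisplacement_rpow hq0.ne' F).ge (Fintype.expect_const _).le)
  gcongr
  calc _ ≤ ‖T (fun i => (ε i : ℤ)) (P F) - P F‖ + ‖T (fun i => (ε i : ℤ)) (P F) - P F -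
      ternarySum (fun j => T (Pi.single j 1) (P F) - P F) ε‖ := norm_le_norm_add_norm_sub _ _
    _ ≤ _ := add_le_add (hcontract _) (herror ε)

lemma IsSmoothing.norm_apply_sub_le (hP : IsSmoothing T K (Finset.Icc (-1) 1) P) (hq : 1 ≤ q)
    (F : E) : ‖P F - F‖ ≤ K * 9 ^ n * meanDisplacement T q F := by
  have hcard : (Finset.Icc (-1 : Fin n → ℤ) 1).card = 3 ^ n := by simp [Pi.card_Icc]
  calc ‖P F - F‖ ≤ K * ∑ a ∈ Finset.Icc (-1) 1, ‖T a F - F‖ := hP.norm_sub_le F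
    _ ≤ K * ∑ _a ∈ Finset.Icc (-1 : Fin n → ℤ) 1, 3 ^ n * meanDisplacement T q F := by
        gcongr with a ha
        exact norm_addChar_sub_le_meanDisplacement hq F (Finset.mem_Icc.1 ha)
    _ = K * 9 ^ n * meanDisplacement T q F := by
        rw [Finset.sum_const, hcard, nsmul_eq_mul, show (9 : ℝ) = 3 * 3 by norm_num, mul_pow]
        push_cast
        ring

lemma norm_addChar_sub_le_add_two_mul {A : Type*} [AddCommGroup A] (T : AddChar A (E →ₗᵢ[ℝ] E))
    (a : A) (F G : E) : ‖T a F - F‖ ≤ ‖T a G - G‖ + 2 * ‖G - F‖ := by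
  have hsplit : T a F - F = (T a G - G) + (-(T a (G - F)) + (G - F)) := by
    rw [map_sub]
    abel
  rw [hsplit, two_mul]
  refine norm_add_le_of_le le_rfl (norm_add_le_of_le ?_ le_rfl)
  rw [norm_neg, LinearIsometry.norm_map]

lemma IsSmoothing.norm_addChar_nsmul_sub_le_add
    (hP : IsSmoothing T K (Finset.Icc (-1) 1) P) (hq : 1 ≤ q) (a : Fin n → ℤ) (k : ℕ) (F : E) :
    ‖T (k • a) F - F‖ ≤
      k * ‖T a (P F) - P F‖ + 2 * (K * 9 ^ n * meanDisplacement T q F) := by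
  refine (norm_addChar_sub_le_add_two_mul T (k • a) F (P F)).trans ?_
  gcongr
  · exact norm_addChar_nsmul_sub_le T a (P F) k
  · exact hP.norm_apply_sub_le hq F

variable {C : ℝ}

lemma TernaryCotypeWith.sum_norm_addChar_smoothing_sub_rpow_le (h : TernaryCotypeWith E q C)
    (hC : 0 ≤ C) (hq : 1 ≤ q) (hn : n ≠ 0)
    (hP : IsSmoothing T K (Finset.Icc (-1) 1) P) (hK : (K : ℝ) = 4 * n * 3 ^ n) (F : E) :
    ∑ j, ‖T (Pi.single j 1) (P F) - P F‖ ^ q ≤ (C * (2 * meanDisplacement T q F)) ^ q := by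
  have hmean := meanDisplacement_nonneg (T := T) (q := q) F
  refine (h n _).trans ?_
  rw [Real.mul_rpow hC (by positivity)]
  gcongr
  exact hP.expect_norm_ternarySum_rpow_le hq hK hn F

-- The number of steps `k` is `n` times the bound `K * 9 ^ n` on the distortion of smoothing, so
-- that the distortion summed over `n` directions is still at most `2 * k` mean displacements.
variable (T) in
lemma TernaryCotypeWith.sum_norm_addChar_nsmul_single_sub_rpow_le (h : TernaryCotypeWith E q C)
    (hC : 0 ≤ C) (hq : 1 ≤ q) (hn : n ≠ 0) {k : ℕ} (hk : k = n * (4 * n * 3 ^ n) * 9 ^ n) (F : E) :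
    ∑ j, ‖T (k • Pi.single j 1) F - F‖ ^ q ≤
      ((C + 1) * (2 * k)) ^ q * 𝔼 ε : Fin n → Ternary, ‖T (fun i => (ε i : ℤ)) F - F‖ ^ q := by
  have hmean := meanDisplacement_nonneg (T := T) (q := q) F
  set K : ℕ := 4 * n * 3 ^ n with hK
  have hK' : (K : ℝ) = 4 * n * 3 ^ n := by exact_mod_cast hK
  obtain ⟨P, hP⟩ := exists_isSmoothing T (K := K) (by positivity) (Finset.Icc (-1) 1)
  rw [← meanDisplacement_rpow (by linarith), ← Real.mul_rpow (by positivity) hmean]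
  set A := meanDisplacement T q F
  have htelescope : ∑ j, (k * ‖T (Pi.single j 1) (P F) - P F‖) ^ q ≤ (k * (C * (2 * A))) ^ q := by
    simp only [Real.mul_rpow (Nat.cast_nonneg k) (norm_nonneg _), ← Finset.mul_sum]
    rw [Real.mul_rpow (Nat.cast_nonneg k) (by positivity)]
    gcongr
    exact h.sum_norm_addChar_smoothing_sub_rpow_le hC hq hn hP hK' F
  have herror : ∑ _j : Fin n, (2 * (K * 9 ^ n * A)) ^ q ≤ (2 * k * A) ^ q := by
    refine (sum_const_rpow_le Finset.univ (by positivity) hq).trans_eq ?_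
    rw [hk, Finset.card_univ, Fintype.card_fin]
    push_cast
    ring_nf
  calc ∑ j, ‖T (k • Pi.single j 1) F - F‖ ^ q
      ≤ ∑ j, (k * ‖T (Pi.single j 1) (P F) - P F‖ + 2 * (K * 9 ^ n * A)) ^ q := by
        gcongr with j
        exact hP.norm_addChar_nsmul_sub_le_add hq _ k F
    _ ≤ (k * (C * (2 * A)) + 2 * k * A) ^ q := by
        simpa only [one_mul] using sum_add_rpow_le Finset.univ (fun _ _ => by positivity)
          (fun _ _ => by positivity) hq zero_le_one (by positivity) (by positivity)
          (by simpa only [one_mul] using htelescope) (by simpa only [one_mul] using herror)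
    _ = ((C + 1) * (2 * k) * A) ^ q := by
        congr 1
        ring

end Displacement

section Translation

variable {X A : Type*} [NormedAddCommGroup X] [NormedSpace ℝ X] [AddCommGroup A] [Fintype A]

/-- The representation `(T(y) F)(x) = F(x + y)` of a finite abelian group by isometries of
`ℓ_p(A; X)`. -/
noncomputable def translation (X A : Type*) [NormedAddCommGroup X] [NormedSpace ℝ X]
    [AddCommGroup A] [Fintype A] (p : ENNReal) [Fact (1 ≤ p)] :
    AddChar A (PiLp p (fun _ : A => X) →ₗᵢ[ℝ] PiLp p (fun _ : A => X)) where
  toFun y := (LinearIsometryEquiv.piLpCongrLeft p ℝ X (Equiv.addRight y).symm).toLinearIsometry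
  map_zero_eq_one' := by
    ext F x
    exact congrArg F (add_zero x)
  map_add_eq_mul' y z := by
    ext F x
    exact congrArg F (by simp [add_assoc])

lemma norm_translation_sub_rpow {q : ℝ} [Fact (1 ≤ ENNReal.ofReal q)] (f : A → X) (y : A) :
    ‖translation X A (ENNReal.ofReal q) y (WithLp.toLp _ f) - WithLp.toLp _ f‖ ^ q =
      Fintype.card A * 𝔼 x, ‖f (x + y) - f x‖ ^ q := by
  rw [norm_piLp_ofReal_rpow, Fintype.expect_eq_sum_div_card, mul_div_cancel₀]
  · rfl
  · exact Nat.cast_ne_zero.2 Fintype.card_ne_zero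

end Translation

section RademacherToMetric

variable {X : Type*} [NormedAddCommGroup X] [NormedSpace ℝ X] {q C : ℝ}

lemma TernaryCotypeWith.metricCotypeInequality (h : TernaryCotypeWith X q C) (hC : 0 ≤ C)
    (hq : 1 ≤ q) {n k : ℕ} (hn : n ≠ 0) (hk : k = n * (4 * n * 3 ^ n) * 9 ^ n) [NeZero (2 * k)] :
    MetricCotypeInequality X q ((C + 1) * (2 * k : ℕ)) n (2 * k) := by
  intro f
  have : Fact (1 ≤ ENNReal.ofReal q) := ⟨ENNReal.one_le_ofReal.2 hq⟩
  let reduction : (Fin n → ℤ) →+ (Fin n → ZMod (2 * k)) :=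
    (Int.castAddHom (ZMod (2 * k))).compLeft (Fin n)
  have hsingle : ∀ j : Fin n, reduction (k • Pi.single j 1) =
      Pi.single j ((2 * k / 2 : ℕ) : ZMod (2 * k)) := fun j => by
    ext i
    rcases eq_or_ne i j with rfl | hij
    · simp [reduction]
    · simp [reduction, hij]
  have hmain := h.piLp.sum_norm_addChar_nsmul_single_sub_rpow_le
    ((translation X (Fin n → ZMod (2 * k)) (ENNReal.ofReal q)).compAddMonoidHom reduction)
    hC hq hn hk (WithLp.toLp _ f)
  simp only [AddChar.compAddMonoidHom_apply, norm_translation_sub_rpow, hsingle, ← Finset.mul_sum,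
    ← Finset.mul_expect] at hmain
  rw [mul_left_comm] at hmain
  push_cast
  exact le_of_mul_le_mul_left hmain (Nat.cast_pos.2 Fintype.card_pos)

theorem RademacherCotype.metricCotype (hq : 1 ≤ q) (h : RademacherCotype X q) :
    MetricCotype X q := by
  obtain ⟨C, hC, hcotype⟩ := h.exists_ternaryCotypeWith hq
  refine metricCotype_iff_exists_metricCotypeInequality.2
    ⟨C + 1, by positivity, fun n hn => ⟨2 * (n * (4 * n * 3 ^ n) * 9 ^ n), ⟨by positivity⟩,
      even_two_mul _, ?_⟩⟩
  have : NeZero (2 * (n * (4 * n * 3 ^ n) * 9 ^ n)) := ⟨by positivity⟩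
  exact hcotype.metricCotypeInequality hC.le hq hn.ne' rfl

end RademacherToMetric

theorem rademacher_cotype_iff_metric_cotype_general (X : Type*) [NormedAddCommGroup X]
    [NormedSpace ℝ X] (q : ℝ) (hq : 1 ≤ q) : RademacherCotype X q ↔ MetricCotype X q :=
  ⟨RademacherCotype.metricCotype hq, MetricCotype.rademacherCotype hq⟩

/-- **Metric cotype theorem (Mendel–Naor).** A Banach space has Rademacher cotype
`q ∈ [2,∞)` if and only if it has metric cotype `q`. -/
theorem rademacher_cotype_iff_metric_cotype (X : Type*) [NormedAddCommGroup X]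
    [NormedSpace ℝ X] [CompleteSpace X] (q : ℝ) (hq : 2 ≤ q) :
    RademacherCotype X q ↔ MetricCotype X q := by
  exact rademacher_cotype_iff_metric_cotype_general X q (by linarith)
end
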